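/- arXiv:1301.4764 — 7 statements merged into one kernel-verified Lean document; each statement's English description precedes it below -/
import Mathlib

section
/- I_3[40] \ {b_40−15, b_40−14} ⊆ J_3[40], where b_40 = 40·39/12 = 130; that is, every k ∈ {0,1,...,130} with k ∉ {115, 116, 123, 124, 125, 126, 127, 128, 129} belongs to J_3[40]. -/
/-!
Each design is glued from thirteen pieces, arranged as in `PG(3,3)`. The forty points are a point
`∞` and thirteen columns of size three, the columns being the points of a projective plane of order
three. The four columns on a line of that plane, together with `∞`, carry a copy of `PG(2,3)` in
which `∞` together with each column is a line; this gives thirteen planes through `∞`. Fix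
one column and let `ℓ` be its union with `∞`, which is a line of four of the planes. Delete `ℓ` from
three of these four planes, and the four lines through `∞` from each of the nine planes not
containing `ℓ`. The pairs of points that are joined inside what remains of the thirteen planes then
partition all pairs of points (`piece_disjoint`, `piece_partition`).

Consequently each of the thirteen pieces can be redecomposed into 4-subsets independently, and
intersection numbers of triples add up over the pieces (`Tri.iUnion`). On a single plane, three
relabelled copies of `PG(2,3)` can be chosen with common pairwise intersection of size
0, 1, 2, 3, 4, 5 or 13 (`common_spec`), in such a way that the common line is `ℓ` for size 1 and that
the common part contains the pencil at `∞` for sizes 4 and 5. Deleting common lines gives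
(`tri_holes`, `tri_piece`) the intersection numbers

* `j ∈ {0,1,2,3,4,5,13}` for the full plane,
* `0` or `12` for a plane without `ℓ`,
* `0`, `1` or `9` for a plane without the pencil at `∞`.

Every required number has the form `j + 12 m + 9 a + b` with `m ≤ 3` and `a + b ≤ 9`
(`exists_params`).
-/

/-- The number of blocks of an `S(2,4,v)` design: `b_v = v(v-1)/12`. -/
def steinerBlockCount (v : ℕ) : ℕ := v * (v - 1) / 12

/-- `B` is the block set of a Steiner system `S(2,4,·)` on the point set `V`:
every block is a 4-element subset of `V` and every pair of distinct points of `V`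
lies in exactly one block. -/
def IsS24 {α : Type} [DecidableEq α] (V : Finset α) (B : Finset (Finset α)) : Prop :=
  (∀ b ∈ B, b ⊆ V ∧ b.card = 4) ∧
  ∀ x y : α, x ∈ V → y ∈ V → x ≠ y → ∃! b, b ∈ B ∧ x ∈ b ∧ y ∈ b

/-- Three block sets have pairwise-coincident intersections. -/
def CoincidentInts {α : Type} [DecidableEq α] (B1 B2 B3 : Finset (Finset α)) : Prop :=
  B1 ∩ B2 = B1 ∩ B3 ∧ B1 ∩ B2 = B2 ∩ B3

/-- `J_3[v]`: the set of `k` such that there exist three `S(2,4,v)` designs on a common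
`v`-element point set whose pairwise intersections coincide and have cardinality `k`. -/
def J3 (v : ℕ) : Set ℕ :=
  {k | ∃ B1 B2 B3 : Finset (Finset (Fin v)),
    IsS24 Finset.univ B1 ∧ IsS24 Finset.univ B2 ∧ IsS24 Finset.univ B3 ∧
    CoincidentInts B1 B2 B3 ∧ (B1 ∩ B2 ∩ B3).card = k}

/-- `I_3[v] = {0,1,...,b_v} \ {b_v-7, ..., b_v-1}`. -/
def I3 (v : ℕ) : Set ℕ :=
  {k | k ≤ steinerBlockCount v} \
    {steinerBlockCount v - 7, steinerBlockCount v - 6, steinerBlockCount v - 5,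
     steinerBlockCount v - 4, steinerBlockCount v - 3, steinerBlockCount v - 2,
     steinerBlockCount v - 1}

open Finset

/-! ### Decompositions of a relation into 4-subsets -/

/-- `B` decomposes the graph with (symmetric, irreflexive) adjacency relation `E` into complete
graphs on four vertices. For `E = (· ≠ ·)` this says that `B` is an `S(2,4,·)`. -/
def Decomp {α : Type} [DecidableEq α] (E : α → α → Prop) (B : Finset (Finset α)) : Prop :=
  (∀ b ∈ B, b.card = 4 ∧ ∀ x ∈ b, ∀ y ∈ b, x ≠ y → E x y) ∧
  ∀ x y, E x y → x ≠ y ∧ ∃! b, b ∈ B ∧ x ∈ b ∧ y ∈ b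

/-- There are three decompositions of `E` any two of which have the same intersection, and this
intersection has `k` blocks. -/
def Tri {α : Type} [DecidableEq α] (E : α → α → Prop) (k : ℕ) : Prop :=
  ∃ (B : Fin 3 → Finset (Finset α)) (C : Finset (Finset α)),
    (∀ s, Decomp E (B s)) ∧ (∀ s t, s ≠ t → B s ∩ B t = C) ∧ C.card = k

/-- The relation `E` without the pairs that lie inside a member of `H`. -/
def deleteHoles {α : Type} (H : Finset (Finset α)) (E : α → α → Prop) (x y : α) : Prop :=
  E x y ∧ ∀ h ∈ H, ¬ (x ∈ h ∧ y ∈ h)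

section Decomp

variable {α β : Type} [DecidableEq α] [DecidableEq β]

lemma Decomp.isS24 [Fintype α] {B : Finset (Finset α)} (h : Decomp (· ≠ ·) B) :
    IsS24 Finset.univ B :=
  ⟨fun b hb => ⟨Finset.subset_univ b, (h.1 b hb).1⟩, fun x y _ _ hxy => (h.2 x y hxy).2⟩

/-- A block has at least two points, so it determines an edge of the decomposed graph. -/
lemma Decomp.exists_edge {E : α → α → Prop} {B : Finset (Finset α)} (h : Decomp E B)
    {b : Finset α} (hb : b ∈ B) : ∃ x ∈ b, ∃ y ∈ b, x ≠ y ∧ E x y := by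
  obtain ⟨x, hx, y, hy, hxy⟩ := Finset.one_lt_card.1 (by rw [(h.1 b hb).1]; norm_num)
  exact ⟨x, hx, y, hy, hxy, (h.1 b hb).2 x hx y hy hxy⟩

lemma Decomp.map {E : α → α → Prop} {B : Finset (Finset α)} (h : Decomp E B) {f : α → β}
    (hf : Function.Injective f) :
    Decomp (Relation.Map E f f) (B.image (Finset.image f)) := by
  refine ⟨?_, ?_⟩
  · intro b' hb'
    obtain ⟨b, hb, rfl⟩ := Finset.mem_image.1 hb'
    refine ⟨by rw [Finset.card_image_of_injective _ hf, (h.1 b hb).1], ?_⟩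
    intro x' hx' y' hy' hne
    obtain ⟨x, hx, rfl⟩ := Finset.mem_image.1 hx'
    obtain ⟨y, hy, rfl⟩ := Finset.mem_image.1 hy'
    exact ⟨x, y, (h.1 b hb).2 x hx y hy (fun e => hne (by rw [e])), rfl, rfl⟩
  · rintro _ _ ⟨x, y, hxy, rfl, rfl⟩
    obtain ⟨hne, b, ⟨hb, hx, hy⟩, huniq⟩ := h.2 x y hxy
    refine ⟨hf.ne hne, b.image f, ⟨Finset.mem_image_of_mem _ hb, Finset.mem_image_of_mem _ hx,
      Finset.mem_image_of_mem _ hy⟩, ?_⟩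
    rintro c' ⟨hc', hxc, hyc⟩
    obtain ⟨c, hc, rfl⟩ := Finset.mem_image.1 hc'
    rw [huniq c ⟨hc, hf.mem_finset_image.1 hxc, hf.mem_finset_image.1 hyc⟩]

/-- Blocks that are removed from a decomposition become holes of the graph. -/
lemma Decomp.sdiff {E : α → α → Prop} {B H : Finset (Finset α)} (h : Decomp E B) (hH : H ⊆ B) :
    Decomp (deleteHoles H E) (B \ H) := by
  refine ⟨?_, ?_⟩
  · intro b hb
    obtain ⟨hbB, hbH⟩ := Finset.mem_sdiff.1 hb
    refine ⟨(h.1 b hbB).1, fun x hx y hy hne => ⟨(h.1 b hbB).2 x hx y hy hne, ?_⟩⟩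
    rintro c hc ⟨hxc, hyc⟩
    have hE := (h.1 b hbB).2 x hx y hy hne
    exact hbH ((h.2 x y hE).2.unique ⟨hbB, hx, hy⟩ ⟨hH hc, hxc, hyc⟩ ▸ hc)
  · rintro x y ⟨hE, hno⟩
    obtain ⟨hne, b, ⟨hb, hx, hy⟩, huniq⟩ := h.2 x y hE
    refine ⟨hne, b, ⟨Finset.mem_sdiff.2 ⟨hb, fun hbH => hno b hbH ⟨hx, hy⟩⟩, hx, hy⟩, ?_⟩
    rintro c ⟨hc, hxc, hyc⟩
    exact huniq c ⟨(Finset.mem_sdiff.1 hc).1, hxc, hyc⟩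

lemma Tri.map {E : α → α → Prop} {k : ℕ} (h : Tri E k) {f : α → β}
    (hf : Function.Injective f) : Tri (Relation.Map E f f) k := by
  obtain ⟨B, C, hB, hC, hk⟩ := h
  have hinj : Function.Injective (Finset.image f) := Finset.image_injective hf
  refine ⟨fun s => (B s).image (Finset.image f), C.image (Finset.image f),
    fun s => (hB s).map hf, fun s t hst => ?_, ?_⟩
  · rw [← Finset.image_inter _ _ hinj, hC s t hst]
  · rw [Finset.card_image_of_injective _ hinj, hk]

/-- Triples of decompositions of edge-disjoint graphs can be glued, and the intersection numbers
add up. -/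
lemma Tri.iUnion {ι : Type} [Fintype ι] {E : ι → α → α → Prop} {k : ι → ℕ}
    (h : ∀ i, Tri (E i) (k i)) (hdisj : ∀ i j x y, E i x y → E j x y → i = j) :
    Tri (fun x y => ∃ i, E i x y) (∑ i, k i) := by
  classical
  choose B C hB hC hk using h
  -- A block belongs to one piece only, since it determines an edge.
  have hpiece : ∀ i j s t b, b ∈ B i s → b ∈ B j t → i = j := by
    intro i j s t b hi hj
    obtain ⟨x, hx, y, hy, hne, hE⟩ := (hB i s).exists_edge hi
    exact hdisj i j x y hE (((hB j t).1 b hj).2 x hx y hy hne)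
  have hCB : ∀ i, C i ⊆ B i 0 := fun i => by
    rw [← hC i 0 1 (by decide)]
    exact Finset.inter_subset_left
  refine ⟨fun s => Finset.univ.biUnion fun i => B i s, Finset.univ.biUnion C, ?_, ?_, ?_⟩
  · intro s
    refine ⟨?_, ?_⟩
    · intro b hb
      obtain ⟨i, -, hi⟩ := Finset.mem_biUnion.1 hb
      exact ⟨((hB i s).1 b hi).1, fun x hx y hy hne => ⟨i, ((hB i s).1 b hi).2 x hx y hy hne⟩⟩
    · rintro x y ⟨i, hE⟩
      obtain ⟨hne, b, ⟨hb, hx, hy⟩, huniq⟩ := (hB i s).2 x y hE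
      refine ⟨hne, b, ⟨Finset.mem_biUnion.2 ⟨i, Finset.mem_univ i, hb⟩, hx, hy⟩, ?_⟩
      rintro c ⟨hc, hxc, hyc⟩
      obtain ⟨j, -, hj⟩ := Finset.mem_biUnion.1 hc
      obtain rfl := hdisj i j x y hE (((hB j s).1 c hj).2 x hxc y hyc hne)
      exact huniq c ⟨hj, hxc, hyc⟩
  · intro s t hst
    ext b
    simp only [Finset.mem_inter, Finset.mem_biUnion, Finset.mem_univ, true_and]
    constructor
    · rintro ⟨⟨i, hi⟩, j, hj⟩
      obtain rfl := hpiece i j s t b hi hj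
      exact ⟨i, hC i s t hst ▸ Finset.mem_inter.2 ⟨hi, hj⟩⟩
    · rintro ⟨i, hi⟩
      rw [← hC i s t hst, Finset.mem_inter] at hi
      exact ⟨⟨i, hi.1⟩, i, hi.2⟩
  · rw [Finset.card_biUnion]
    · exact Finset.sum_congr rfl fun i _ => hk i
    · intro i _ j _ hij
      exact Finset.disjoint_left.2 fun b hi hj => hij (hpiece i j 0 0 b (hCB i hi) (hCB j hj))

end Decomp

/-! ### Triples of relabelled projective planes of order three -/

/-- The projective plane of order three. The lines through the point `0` are `0` together with one
of the columns `{1,2,3}`, `{4,5,6}`, `{7,8,9}`, `{10,11,12}`; the other nine are the words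
`(r, s, r + s, r + 2 s)` of the tetracode, read as transversals of the four columns. -/
def planeLines : Finset (Finset (Fin 13)) :=
  {{0, 1, 2, 3}, {0, 4, 5, 6}, {0, 7, 8, 9}, {0, 10, 11, 12},
   {1, 4, 7, 10}, {1, 5, 8, 12}, {1, 6, 9, 11},
   {2, 4, 8, 11}, {2, 5, 9, 10}, {2, 6, 7, 12},
   {3, 4, 9, 12}, {3, 5, 7, 11}, {3, 6, 8, 10}}

/-- For each of seven levels, three permutations of the points of the plane. At level `4` they
rotate the last column; at level `5` they negate the symbols of the tetracode in two of its
four coordinates. -/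
def relabel : Fin 7 → Fin 3 → Fin 13 → Fin 13 :=
  ![![id, ![10, 11, 4, 9, 0, 7, 3, 5, 6, 12, 2, 1, 8], ![5, 7, 3, 0, 8, 4, 1, 2, 6, 10, 12, 9, 11]],
    ![id, ![1, 2, 0, 3, 6, 9, 4, 5, 11, 8, 10, 12, 7], ![3, 0, 2, 1, 4, 11, 9, 12, 8, 10, 7, 5, 6]],
    ![id, ![2, 0, 3, 1, 4, 9, 5, 7, 8, 6, 10, 12, 11], ![1, 2, 0, 3, 4, 7, 8, 5, 6, 10, 12, 11, 9]],
    ![id, ![2, 1, 3, 0, 7, 11, 12, 4, 6, 10, 5, 8, 9], ![0, 1, 2, 3, 4, 7, 11, 10, 5, 9, 8, 6, 12]],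
    ![id, ![0, 1, 2, 3, 4, 5, 6, 7, 8, 9, 11, 12, 10], ![0, 1, 2, 3, 4, 5, 6, 7, 8, 9, 12, 10, 11]],
    ![id, ![0, 1, 2, 3, 4, 5, 6, 7, 9, 8, 10, 12, 11], ![0, 1, 2, 3, 4, 6, 5, 7, 8, 9, 10, 12, 11]],
    ![id, id, id]]

/-- The plane relabelled by `relabel n s`. -/
def planeCopy (n : Fin 7) (s : Fin 3) : Finset (Finset (Fin 13)) :=
  planeLines.image (Finset.image (relabel n s))

/-- The lines common to the three relabelled planes at level `n`. -/
def common (n : Fin 7) : Finset (Finset (Fin 13)) := planeCopy n 0 ∩ planeCopy n 1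

/-- The number of common lines at each level. -/
def level : Fin 7 → ℕ := ![0, 1, 2, 3, 4, 5, 13]

lemma relabel_injective : ∀ n s, Function.Injective (relabel n s) := by
  decide +kernel

lemma planeLines_decomp : Decomp (· ≠ ·) planeLines := by
  have h4 : planeLines.image Finset.card = {4} := by decide +kernel
  have h1 : ∀ x y : Fin 13, x ≠ y →
      (planeLines.filter fun b => x ∈ b ∧ y ∈ b).card = 1 := by decide +kernel
  refine ⟨fun b hb => ⟨Finset.mem_singleton.1 (h4 ▸ Finset.mem_image_of_mem _ hb),
    fun _ _ _ _ hne => hne⟩, fun x y hxy => ⟨hxy, ?_⟩⟩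
  obtain ⟨b, hb⟩ := Finset.card_eq_one.1 (h1 x y hxy)
  have hmem : ∀ c, (c ∈ planeLines ∧ x ∈ c ∧ y ∈ c) ↔ c = b := fun c => by
    rw [← Finset.mem_singleton, ← hb, Finset.mem_filter]
  exact ⟨b, (hmem b).2 rfl, fun c hc => (hmem c).1 hc⟩

lemma planeCopy_decomp (n : Fin 7) (s : Fin 3) : Decomp (· ≠ ·) (planeCopy n s) := by
  have hinj := relabel_injective n s
  have hsurj := Finite.surjective_of_injective hinj
  have hmap : Relation.Map (· ≠ ·) (relabel n s) (relabel n s) = (· ≠ ·) := by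
    ext x y
    constructor
    · rintro ⟨a, b, hab, rfl, rfl⟩
      exact hinj.ne hab
    · intro hxy
      obtain ⟨a, rfl⟩ := hsurj x
      obtain ⟨b, rfl⟩ := hsurj y
      exact ⟨a, b, fun e => hxy (by rw [e]), rfl, rfl⟩
  exact hmap ▸ planeLines_decomp.map hinj

lemma common_spec : ∀ n, (∀ s t, s ≠ t → planeCopy n s ∩ planeCopy n t = common n) ∧
    (common n).card = level n := by
  decide +kernel

/-- Deleting common lines `H` from the three planes at level `n`. -/
lemma tri_holes {n : Fin 7} {H : Finset (Finset (Fin 13))} (hH : H ⊆ common n) :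
    Tri (deleteHoles H (· ≠ ·)) (level n - H.card) := by
  obtain ⟨hint, hcard⟩ := common_spec n
  have hsub : ∀ s, common n ⊆ planeCopy n s := fun s => by
    obtain ⟨t, ht⟩ := exists_ne s
    rw [← hint s t ht.symm]
    exact Finset.inter_subset_left
  refine ⟨fun s => planeCopy n s \ H, common n \ H,
    fun s => (planeCopy_decomp n s).sdiff (hH.trans (hsub s)), fun s t hst => ?_, ?_⟩
  · rw [← hint s t hst, ← Finset.inf_eq_inter, ← Finset.inf_eq_inter, inf_sdiff]
  · rw [Finset.card_sdiff_of_subset hH, hcard]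

/-! ### The complete graph on forty points as a union of thirteen planes -/

/-- The lines of a projective plane of order three with point set `ℤ/13` (translates of the
difference set `{0,1,3,9}`), each listed in increasing order. Those through `0` come first. -/
def baseLines : Fin 13 → Fin 4 → ℕ :=
  ![![0, 1, 3, 9], ![0, 2, 8, 12], ![0, 4, 5, 7], ![0, 6, 10, 11],
    ![1, 2, 4, 10], ![2, 3, 5, 11], ![3, 4, 6, 12], ![1, 5, 6, 8], ![2, 6, 7, 9],
    ![3, 7, 8, 10], ![4, 8, 9, 11], ![5, 9, 10, 12], ![1, 7, 11, 12]]

/-- The embedding of the plane whose point `0` goes to `0` and whose four columns go to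
the columns `{3 c + 1, 3 c + 2, 3 c + 3}`, where `c` runs over the `i`-th base line. -/
def planeMap (i : Fin 13) (a : Fin 13) : Fin 40 :=
  if a = 0 then 0
  else Fin.ofNat 40 (3 * baseLines i (Fin.ofNat 4 ((a.val - 1) / 3)) + (a.val - 1) % 3 + 1)

/-- The lines deleted from the `i`-th plane: none for `i = 0`, the line `{0,1,2,3}` for the other
three planes through it, and all four lines through `0` for the remaining nine planes. -/
def holes (i : Fin 13) : Finset (Finset (Fin 13)) :=
  if i = 0 then ∅
  else if i < 4 then {{0, 1, 2, 3}}
  else {{0, 1, 2, 3}, {0, 4, 5, 6}, {0, 7, 8, 9}, {0, 10, 11, 12}}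

/-- The pairs of points joined by a line of the `i`-th plane that is not deleted. -/
def piece (i : Fin 13) : Fin 40 → Fin 40 → Prop :=
  Relation.Map (deleteHoles (holes i) (· ≠ ·)) (planeMap i) (planeMap i)

/-- The column of a point, where `0` is counted in column `0`. -/
def column (x : Fin 40) : ℕ := (x.val - 1) / 3

/-- The index of the piece containing the pair of distinct points `x, y`: the base line through the
two columns, or through the column and column `0` when `x` and `y` have the same column. -/
def pieceIndex (x y : Fin 40) : ℕ :=
  let p := column x
  let q := if column x = column y then 0 else column y
  (List.finRange 13).findIdx fun i => (∃ u, baseLines i u = p) ∧ ∃ u, baseLines i u = q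

lemma planeMap_injective : ∀ i, Function.Injective (planeMap i) := by
  decide +kernel

lemma pieceIndex_spec : ∀ i a b : Fin 13,
    (a ≠ b ∧ ((holes i).filter fun h => a ∈ h ∧ b ∈ h) = ∅) →
    pieceIndex (planeMap i a) (planeMap i b) = i.val := by
  decide +kernel

lemma piece_cover : ∀ x y : Fin 40, x ≠ y →
    ∃ i : Fin 13, pieceIndex x y = i.val ∧ ∃ a, planeMap i a = x ∧ ∃ b, planeMap i b = y ∧
      ((holes i).filter fun h => a ∈ h ∧ b ∈ h) = ∅ := by
  decide +kernel

lemma piece_disjoint (i j : Fin 13) (x y : Fin 40) (hi : piece i x y) (hj : piece j x y) :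
    i = j := by
  have key : ∀ k, piece k x y → pieceIndex x y = k.val := by
    rintro k ⟨a, b, hab, rfl, rfl⟩
    exact pieceIndex_spec k a b ⟨hab.1, Finset.filter_eq_empty_iff.2 hab.2⟩
  exact Fin.ext ((key i hi).symm.trans (key j hj))

lemma piece_partition : (fun x y => ∃ i, piece i x y) = (· ≠ · : Fin 40 → Fin 40 → Prop) := by
  ext x y
  constructor
  · rintro ⟨i, a, b, hab, rfl, rfl⟩
    exact (planeMap_injective i).ne hab.1
  · intro hxy
    obtain ⟨i, -, a, ha, b, hb, hh⟩ := piece_cover x y hxy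
    exact ⟨i, a, b, ⟨fun e => hxy (ha.symm.trans ((congrArg _ e).trans hb)),
      Finset.filter_eq_empty_iff.1 hh⟩, ha, hb⟩

lemma tri_piece {i : Fin 13} {n : Fin 7} (h : holes i ⊆ common n) :
    Tri (piece i) (level n - (holes i).card) :=
  (tri_holes h).map (planeMap_injective i)

/-! ### Choice of the levels -/

/-- Levels for the thirteen pieces: `j` for the full plane, `m` of the next three planes and `a` of
the last nine unchanged (level `6`), `b` more of the last nine with one common line besides the
pencil (level `5`), and all other pieces with no common line. -/
def levels (j : Fin 7) (m a b : ℕ) (i : Fin 13) : Fin 7 :=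
  if i.val = 0 then j
  else if i.val < 4 then (if i.val ≤ m then 6 else 1)
  else if i.val < 4 + a then 6
  else if i.val < 4 + a + b then 5
  else 4

lemma holes_subset_common (j : Fin 7) (m a b : ℕ) (i : Fin 13) :
    holes i ⊆ common (levels j m a b i) := by
  have h0 : ∀ i : Fin 13, i.val = 0 → ∀ n, holes i \ common n = ∅ := by decide +kernel
  have h1 : ∀ i : Fin 13, i.val < 4 → i.val ≠ 0 → ∀ n : Fin 7, (n = 1 ∨ n = 6) →
      holes i \ common n = ∅ := by decide +kernel
  have h2 : ∀ i : Fin 13, ∀ n : Fin 7, (n = 4 ∨ n = 5 ∨ n = 6) → holes i \ common n = ∅ := by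
    decide +kernel
  rw [← Finset.sdiff_eq_empty_iff_subset]
  unfold levels
  split_ifs with hi hi4
  · exact h0 i hi j
  · exact h1 i hi4 hi 6 (by decide)
  · exact h1 i hi4 hi 1 (by decide)
  · exact h2 i 6 (by decide)
  · exact h2 i 5 (by decide)
  · exact h2 i 4 (by decide)

/-- The number of common lines is `j + 12 m + 9 a + b`. The two inequalities, saying that `b`
is determined by the other parameters and that `a + b ≤ 9`, only serve to prune the search. -/
lemma exists_params : ∀ k : Fin 131,
    k.val ∉ [115, 116, 123, 124, 125, 126, 127, 128, 129] →
    ∃ (j : Fin 7) (m : Fin 4) (a : Fin 10),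
      level j + 12 * m.val + 9 * a.val ≤ k.val ∧
      k.val ≤ level j + 12 * m.val + 9 * a.val + (9 - a.val) ∧
      ∑ i, (level (levels j m a (k.val - (level j + 12 * m.val + 9 * a.val)) i) -
        (holes i).card) = k.val := by
  decide +kernel

/-- `I_3[40] \ {b_40 - 15, b_40 - 14} ⊆ J_3[40]`. -/
theorem stmt2 :
    I3 40 \ {steinerBlockCount 40 - 15, steinerBlockCount 40 - 14} ⊆ J3 40 := by
  rintro k ⟨⟨hk, hk1⟩, hk2⟩
  have hb : steinerBlockCount 40 = 130 := rfl
  change k ≤ steinerBlockCount 40 at hk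
  rw [hb] at hk
  have hk' : k ∉ [115, 116, 123, 124, 125, 126, 127, 128, 129] := by
    simp only [hb, Set.mem_insert_iff, Set.mem_singleton_iff] at hk1 hk2
    simp only [List.mem_cons, List.not_mem_nil, or_false]
    omega
  obtain ⟨j, m, a, -, -, hsum⟩ := exists_params ⟨k, by omega⟩ hk'
  have htri := Tri.iUnion (fun i => tri_piece (holes_subset_common j m a
    (k - (level j + 12 * m.val + 9 * a.val)) i)) piece_disjoint
  rw [piece_partition, hsum] at htri
  obtain ⟨B, C, hB, hC, hcard⟩ := htri
  have h01 := hC 0 1 (by decide)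
  have h02 := hC 0 2 (by decide)
  have h12 := hC 1 2 (by decide)
  refine ⟨B 0, B 1, B 2, (hB 0).isS24, (hB 1).isS24, (hB 2).isS24,
    ⟨h01.trans h02.symm, h01.trans h12.symm⟩, ?_⟩
  have hC2 : C ⊆ B 2 := by
    rw [← h02]
    exact Finset.inter_subset_right
  rw [h01, Finset.inter_eq_left.2 hC2, hcard]
end

section
/- J_3[16] = I_3[16] \ {7,9,10,11,12}; that is, since b_16 = 20, J_3[16] = {0,1,2,3,4,5,6,8,20}. -/
namespace Design16

/-! ### Explicit systems -/

/-- The set of points encoded by the binary digits of `n`. -/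
def dec (n : ℕ) : Finset (Fin 16) := Finset.univ.filter fun i => n.testBit i

/-- The block set encoded by a list of bit masks. -/
def design (l : List ℕ) : Finset (Finset (Fin 16)) := l.toFinset.image dec

/-- Executable form of: `l` lists the blocks of an `S(2,4,16)` as bit masks. -/
def Good (l : List ℕ) : Prop :=
  (∀ n ∈ l, n < 2 ^ 16 ∧ (dec n).card = 4) ∧
    ∀ i j : Fin 16, i < j → (l.filter fun n => n.testBit i && n.testBit j).length = 1

instance (l : List ℕ) : Decidable (Good l) := by unfold Good; infer_instance

lemma dec_inj {m n : ℕ} (hm : m < 2 ^ 16) (hn : n < 2 ^ 16) (h : dec m = dec n) : m = n := by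
  apply Nat.eq_of_testBit_eq
  intro i
  by_cases hi : i < 16
  · have := Finset.ext_iff.1 h ⟨i, hi⟩
    simp only [dec, Finset.mem_filter, Finset.mem_univ, true_and] at this
    exact Bool.eq_iff_iff.2 this
  · have h16 : 2 ^ 16 ≤ 2 ^ i := Nat.pow_le_pow_right (by norm_num) (by omega)
    rw [Nat.testBit_lt_two_pow (hm.trans_le h16), Nat.testBit_lt_two_pow (hn.trans_le h16)]

lemma isS24_design {l : List ℕ} (h : Good l) : IsS24 Finset.univ (design l) := by
  refine ⟨?_, ?_⟩
  · intro b hb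
    obtain ⟨n, hn, rfl⟩ := Finset.mem_image.1 hb
    exact ⟨Finset.subset_univ _, (h.1 n (List.mem_toFinset.1 hn)).2⟩
  · have key : ∀ x y : Fin 16, x < y → ∃! b, b ∈ design l ∧ x ∈ b ∧ y ∈ b := by
      intro x y hxy
      obtain ⟨n, hn⟩ := List.length_eq_one_iff.1 (h.2 x y hxy)
      have hmem : ∀ k, k ∈ l ∧ x ∈ dec k ∧ y ∈ dec k ↔ k = n := by
        intro k
        rw [← List.mem_singleton, ← hn, List.mem_filter]
        simp [dec]
      refine ⟨dec n, ?_, ?_⟩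
      · obtain ⟨h1, h2, h3⟩ := (hmem n).2 rfl
        exact ⟨Finset.mem_image_of_mem _ (List.mem_toFinset.2 h1), h2, h3⟩
      · rintro b ⟨hb, hx, hy⟩
        obtain ⟨k, hk, rfl⟩ := Finset.mem_image.1 hb
        rw [(hmem k).1 ⟨List.mem_toFinset.1 hk, hx, hy⟩]
    intro x y _ _ hxy
    rcases lt_or_gt_of_ne hxy with h' | h'
    · exact key x y h'
    · simpa only [and_comm] using key y x h'

lemma design_inter {l₁ l₂ : List ℕ} (h₁ : Good l₁) (h₂ : Good l₂) :
    design l₁ ∩ design l₂ = (l₁.toFinset ∩ l₂.toFinset).image dec := by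
  ext b
  simp only [design, Finset.mem_inter, Finset.mem_image]
  constructor
  · rintro ⟨⟨m, hm, rfl⟩, n, hn, hmn⟩
    have := dec_inj (h₂.1 n (List.mem_toFinset.1 hn)).1 (h₁.1 m (List.mem_toFinset.1 hm)).1 hmn
    subst this
    exact ⟨n, ⟨hm, hn⟩, rfl⟩
  · rintro ⟨n, ⟨hm, hn⟩, rfl⟩
    exact ⟨⟨n, hm, rfl⟩, n, hn, rfl⟩

/-- The last list `s` contains the common blocks, so that all hypotheses are decidable. -/
lemma mem_J3_of_lists (l₁ l₂ l₃ s : List ℕ)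
    (h : Good l₁ ∧ Good l₂ ∧ Good l₃ ∧ l₁.toFinset ∩ l₂.toFinset = s.toFinset ∧
      l₁.toFinset ∩ l₃.toFinset = s.toFinset ∧ l₂.toFinset ∩ l₃.toFinset = s.toFinset) :
    s.toFinset.card ∈ J3 16 := by
  obtain ⟨h1, h2, h3, h12, h13, h23⟩ := h
  refine ⟨design l₁, design l₂, design l₃, isS24_design h1, isS24_design h2, isS24_design h3,
    ⟨?_, ?_⟩, ?_⟩
  · rw [design_inter h1 h2, design_inter h1 h3, h12, h13]
  · rw [design_inter h1 h2, design_inter h2 h3, h12, h23]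
  · have hs : design l₁ ∩ design l₂ ⊆ design l₃ := by
      rw [design_inter h1 h2, h12, ← h13, ← design_inter h1 h3]
      exact Finset.inter_subset_right
    rw [Finset.inter_eq_left.2 hs, design_inter h1 h2, h12]
    refine Finset.card_image_of_injOn fun m hm n hn hmn => ?_
    rw [← h12] at hm hn
    have hm' := List.mem_toFinset.1 (Finset.mem_inter.1 (Finset.mem_coe.1 hm)).1
    have hn' := List.mem_toFinset.1 (Finset.mem_inter.1 (Finset.mem_coe.1 hn)).1
    exact dec_inj (h1.1 m hm').1 (h1.1 n hn').1 hmn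

/-- The affine plane over `𝔽₄`, the point `(i, j)` being the bit `4 * i + j`: rows, columns, and
the graphs of the even permutations of `{0, 1, 2, 3}`. -/
def plane : List ℕ :=
  [15, 240, 3840, 61440, 4369, 8738, 17476, 34952, 33825, 10305, 17025, 18450, 33090, 5250, 33300,
   6180, 8580, 9240, 16680, 4680]

lemma mem0 : 0 ∈ J3 16 :=
  mem_J3_of_lists plane
    [312, 612, 1472, 2062, 3105, 4163, 4244, 5640, 8354, 8721, 14592, 16521, 17154, 18512, 25604,
     33029, 33810, 35456, 41032, 53280]
    [177, 329, 706, 1286, 3152, 4613, 5256, 6432, 8220, 9760, 10243, 16484, 18952, 20498, 24960,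
     32810, 33552, 34948, 45120, 50177]
    [] (by decide +kernel)

lemma mem1 : 1 ∈ J3 16 :=
  mem_J3_of_lists plane
    [23, 312, 1188, 2256, 2817, 4193, 4744, 7170, 8738, 9536, 10252, 16770, 16964, 17417, 28688,
     32842, 34320, 37124, 41089, 51232]
    [139, 708, 1076, 1793, 2584, 4200, 4370, 7296, 8738, 10560, 12293, 16465, 16800, 18438, 25608,
     33036, 33858, 34849, 41104, 53760]
    [8738] (by decide +kernel)

lemma mem2 : 2 ∈ J3 16 :=
  mem_J3_of_lists plane
    [267, 568, 1061, 1232, 2146, 4512, 6660, 8326, 9024, 10257, 13320, 16460, 17025, 19712, 20498,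
     33044, 34306, 34952, 36929, 57376]
    [75, 228, 402, 1542, 3329, 4632, 6178, 8241, 8460, 10816, 13440, 17025, 17448, 18452, 20800,
     33568, 33872, 34952, 36869, 57346]
    [34952, 17025] (by decide +kernel)

lemma mem3 : 3 ∈ J3 16 :=
  mem_J3_of_lists plane
    [360, 540, 771, 1186, 3332, 4229, 5200, 6688, 8592, 10305, 12298, 17088, 17417, 18450, 24612,
     32817, 32838, 34952, 42496, 53504]
    [39, 281, 706, 1172, 2820, 4172, 7200, 8608, 9226, 10305, 12816, 16936, 17728, 18450, 20609,
     32880, 34305, 34952, 37122, 57348]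
    [34952, 10305, 18450] (by decide +kernel)

lemma mem4 : 4 ∈ J3 16 :=
  mem_J3_of_lists plane
    [226, 404, 1290, 2880, 3089, 4169, 4626, 6180, 8481, 8716, 13440, 16440, 17025, 17476, 26626,
     32775, 34336, 34952, 41040, 53504]
    [269, 616, 1050, 1440, 2129, 4290, 4880, 6180, 8227, 8340, 11776, 17025, 17476, 18690, 28680,
     33286, 34952, 37889, 41280, 49200]
    [17476, 34952, 17025, 6180] (by decide +kernel)

lemma mem5 : 5 ∈ J3 16 :=
  mem_J3_of_lists plane
    [240, 547, 1049, 1348, 2322, 4680, 5250, 6180, 8206, 9088, 10305, 16916, 18568, 20737, 25632,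
     32901, 33064, 36352, 45072, 49218]
    [43, 240, 284, 1553, 2944, 4680, 5250, 6180, 8710, 9504, 10305, 16517, 16706, 19464, 28688,
     33860, 34834, 37121, 41096, 49696]
    [240, 10305, 5250, 6180, 4680] (by decide +kernel)

lemma mem6 : 6 ∈ J3 16 :=
  mem_J3_of_lists plane
    [113, 142, 3840, 4372, 4680, 5280, 6147, 8577, 8738, 9284, 10264, 16680, 16901, 17426, 18624,
     33090, 33424, 33801, 34852, 61440]
    [101, 154, 3840, 4481, 4680, 5168, 6150, 8468, 8738, 9408, 10249, 16680, 17028, 17411, 18512,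
     33090, 33297, 33804, 34976, 61440]
    [3840, 61440, 8738, 33090, 16680, 4680] (by decide +kernel)

lemma mem8 : 8 ∈ J3 16 :=
  mem_J3_of_lists plane
    [15, 1224, 1556, 2224, 3330, 4196, 4369, 6664, 8580, 8738, 10305, 16466, 16680, 17025, 29696,
     33600, 33825, 36994, 40984, 51204]
    [15, 600, 1346, 2100, 3208, 4320, 4369, 5636, 8580, 8738, 10305, 16680, 17025, 22530, 25616,
     32914, 33825, 35584, 45064, 49220]
    [15, 4369, 8738, 33825, 10305, 17025, 8580, 16680] (by decide +kernel)

lemma mem20 : 20 ∈ J3 16 :=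
  mem_J3_of_lists plane plane plane plane (by decide +kernel)

end Design16

namespace Design16

/-! ### Counting in an `S(2,4,16)` -/

/-- Double counting of flags with weights on points and blocks. -/
lemma sum_flags (B : Finset (Finset (Fin 16))) {M : Type} [AddCommMonoid M]
    (g : Fin 16 → Finset (Fin 16) → M) :
    ∑ b ∈ B, ∑ x ∈ b, g x b = ∑ x, ∑ b ∈ B with x ∈ b, g x b := by
  rw [Finset.sum_comm' (t' := Finset.univ) (s' := fun x => B.filter (x ∈ ·))]
  intro b x
  simp

section

variable {B : Finset (Finset (Fin 16))}

lemma eq_of_two (hB : IsS24 Finset.univ B)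
    {b c : Finset (Fin 16)} (hb : b ∈ B) (hc : c ∈ B) {x y : Fin 16} (hxy : x ≠ y)
    (hxb : x ∈ b) (hyb : y ∈ b) (hxc : x ∈ c) (hyc : y ∈ c) : b = c :=
  (hB.2 x y (Finset.mem_univ _) (Finset.mem_univ _) hxy).unique ⟨hb, hxb, hyb⟩ ⟨hc, hxc, hyc⟩

lemma exists_join (hB : IsS24 Finset.univ B)
    {x y : Fin 16} (hxy : x ≠ y) : ∃ b ∈ B, x ∈ b ∧ y ∈ b := by
  obtain ⟨b, ⟨h1, h2⟩, -⟩ := hB.2 x y (Finset.mem_univ _) (Finset.mem_univ _) hxy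
  exact ⟨b, h1, h2⟩

/-- The blocks through `x`, with `x` removed, partition the remaining points. -/
lemma sum_pencil_erase (hB : IsS24 Finset.univ B)
    {M : Type} [AddCommMonoid M] (f : Fin 16 → M) (x : Fin 16) :
    ∑ b ∈ B with x ∈ b, ∑ y ∈ b.erase x, f y = ∑ y ∈ Finset.univ.erase x, f y := by
  have hU : Finset.univ.erase x = (B.filter (x ∈ ·)).biUnion fun b => b.erase x := by
    ext y
    simp only [Finset.mem_erase, Finset.mem_univ, and_true, Finset.mem_biUnion, Finset.mem_filter]
    constructor
    · intro h
      obtain ⟨b, hb, h1, h2⟩ := exists_join hB h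
      exact ⟨b, ⟨hb, h2⟩, h, h1⟩
    · rintro ⟨b, -, h, -⟩
      exact h
  rw [hU, Finset.sum_biUnion]
  intro b hb c hc hbc
  simp only [Finset.coe_filter, Set.mem_ofPred_eq] at hb hc
  refine Finset.disjoint_left.2 fun y hy hy' => hbc ?_
  rw [Finset.mem_erase] at hy hy'
  exact eq_of_two hB hb.1 hc.1 hy.1 hy.2 hb.2 hy'.2 hc.2

lemma card_pencil (hB : IsS24 Finset.univ B) (x : Fin 16) : (B.filter (x ∈ ·)).card = 5 := by
  have h := sum_pencil_erase hB (fun _ => 1) x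
  have h3 : ∀ b ∈ B.filter (x ∈ ·), ∑ y ∈ b.erase x, 1 = 3 := by
    intro b hb
    rw [Finset.mem_filter] at hb
    rw [← Finset.card_eq_sum_ones, Finset.card_erase_of_mem hb.2, (hB.1 b hb.1).2]
  rw [Finset.sum_congr rfl h3, ← Finset.card_eq_sum_ones,
    Finset.card_erase_of_mem (Finset.mem_univ x)] at h
  simp at h
  omega

lemma sum_pencil (hB : IsS24 Finset.univ B)
    {M : Type} [AddCommMonoid M] (f : Fin 16 → M) (x : Fin 16) :
    ∑ b ∈ B with x ∈ b, ∑ y ∈ b, f y = ∑ y, f y + 4 • f x := by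
  have h : ∀ b ∈ B.filter (x ∈ ·), ∑ y ∈ b, f y = ∑ y ∈ b.erase x, f y + f x := by
    intro b hb
    exact (Finset.sum_erase_add _ _ (Finset.mem_filter.1 hb).2).symm
  rw [Finset.sum_congr rfl h, Finset.sum_add_distrib, sum_pencil_erase hB, Finset.sum_const,
    card_pencil hB, ← Finset.sum_erase_add _ f (Finset.mem_univ x), succ_nsmul' (f x) 4, add_assoc]

lemma card_blocks (hB : IsS24 Finset.univ B) : B.card = 20 := by
  have h := sum_flags B (fun _ _ => 1)
  simp only [← Finset.card_eq_sum_ones, card_pencil hB] at h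
  rw [Finset.sum_congr rfl fun b hb => (hB.1 b hb).2] at h
  simp at h
  omega

end

/-! ### Blocks meeting a set in an odd number of points -/

/-- The blocks of `B` that meet the set with indicator function `W` in an odd number of points. -/
def odd (B : Finset (Finset (Fin 16))) (W : Fin 16 → ZMod 2) : Finset (Finset (Fin 16)) :=
  B.filter fun b => ∑ x ∈ b, W x = 1

lemma zmod2_cases (a : ZMod 2) : a = 0 ∨ a = 1 := by
  revert a; decide

lemma odd_add (B : Finset (Finset (Fin 16))) (W W' : Fin 16 → ZMod 2) :
    odd B (W + W') = symmDiff (odd B W) (odd B W') := by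
  ext b
  simp only [odd, Finset.mem_symmDiff, Finset.mem_filter, Pi.add_apply, Finset.sum_add_distrib]
  rcases zmod2_cases (∑ x ∈ b, W x) with h | h <;>
    rcases zmod2_cases (∑ x ∈ b, W' x) with h' | h' <;> rw [h, h'] <;> by_cases hb : b ∈ B <;>
    simp [hb]

section

variable {B : Finset (Finset (Fin 16))} {W : Fin 16 → ZMod 2}

/-- A set meeting every block evenly has even size. -/
lemma sum_eq_zero_of_odd_empty (hB : IsS24 Finset.univ B)
    (hW : ∀ b ∈ B, ∑ x ∈ b, W x = 0) : ∑ x, W x = 0 := by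
  have h := sum_pencil hB W 0
  rw [Finset.sum_eq_zero fun b hb => hW b (Finset.mem_filter.1 hb).1] at h
  have h4 : (4 : ℕ) • W 0 = 0 := by
    rcases zmod2_cases (W 0) with h | h <;> rw [h] <;> decide
  rw [h4, add_zero] at h
  exact h.symm


/-- For a set of even size, every point is on an even number of odd blocks. -/
lemma even_odd_pencil (hB : IsS24 Finset.univ B) (hW : ∑ x, W x = 0)
    (x : Fin 16) : Even ((odd B W).filter (x ∈ ·)).card := by
  have h := sum_pencil hB W x
  have h4 : (4 : ℕ) • W x = 0 := by
    rcases zmod2_cases (W x) with h | h <;> rw [h] <;> decide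
  rw [hW, h4, add_zero] at h
  have h' : ∀ b ∈ B.filter (x ∈ ·),
      ∑ y ∈ b, W y = if ∑ y ∈ b, W y = 1 then 1 else 0 := by
    intro b _
    rcases zmod2_cases (∑ y ∈ b, W y) with h | h <;> rw [h] <;> simp
  rw [Finset.sum_congr rfl h', Finset.sum_boole, Finset.filter_filter] at h
  rw [← ZMod.natCast_eq_zero_iff_even, ← h, odd, Finset.filter_filter]
  simp only [and_comm]

/-- Squares are `0` or `1` modulo `4` according to parity, so the number of odd blocks is
congruent to the sum of the squares of the intersection sizes, which is `w ^ 2 + 4 * w`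
for a set of size `w`. -/
lemma four_dvd_card_odd (hB : IsS24 Finset.univ B) (hW : ∑ x, W x = 0) : 4 ∣ (odd B W).card := by
  have hsq : ∀ b ∈ B, ((∑ x ∈ b, (W x).val : ℕ) : ZMod 4) ^ 2 =
      if ∑ x ∈ b, W x = 1 then 1 else 0 := by
    intro b _
    have hc : ((∑ x ∈ b, (W x).val : ℕ) : ZMod 2) = ∑ x ∈ b, W x := by
      push_cast
      exact Finset.sum_congr rfl fun x _ => ZMod.natCast_zmod_val _
    rw [← hc]
    generalize ∑ x ∈ b, (W x).val = t
    obtain ⟨s, rfl | rfl⟩ := Nat.even_or_odd' t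
    · have : ((2 : ZMod 4)) ^ 2 = 0 := by decide
      have h2 : (2 : ZMod 2) = 0 := by decide
      push_cast
      rw [mul_pow, this, h2]
      simp
    · have : ((2 : ZMod 4)) ^ 2 = 0 := by decide
      have h4 : (2 : ZMod 4) * 2 = 0 := by decide
      have h2 : (2 : ZMod 2) = 0 := by decide
      push_cast
      rw [h2]
      simp only [zero_mul, zero_add, if_true]
      linear_combination (s ^ 2 : ZMod 4) * this + (s : ZMod 4) * h4
  have hcount : ((odd B W).card : ZMod 4) = ∑ b ∈ B, ((∑ x ∈ b, (W x).val : ℕ) : ZMod 4) ^ 2 := by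
    rw [Finset.sum_congr rfl hsq, Finset.sum_boole, odd]
  have hflag := sum_flags B fun x b => (W x).val * ∑ y ∈ b, (W y).val
  simp only [← Finset.sum_mul, ← Finset.mul_sum, sum_pencil hB] at hflag
  obtain ⟨s, hs⟩ : Even (∑ x, (W x).val) := by
    rw [← ZMod.natCast_eq_zero_iff_even, ← hW]
    push_cast
    exact Finset.sum_congr rfl fun x _ => ZMod.natCast_zmod_val _
  rw [← ZMod.natCast_eq_zero_iff, hcount]
  have hfl : ∑ b ∈ B, ((∑ x ∈ b, (W x).val : ℕ) : ZMod 4) ^ 2 =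
      ((∑ x, (W x).val * (∑ y, (W y).val + 4 • (W x).val) : ℕ) : ZMod 4) := by
    rw [← hflag]
    push_cast
    exact Finset.sum_congr rfl fun b _ => by ring
  rw [hfl, ZMod.natCast_eq_zero_iff]
  simp only [mul_add, Finset.sum_add_distrib, ← Finset.sum_mul, hs]
  apply dvd_add
  · exact ⟨s * s, by ring⟩
  · exact Finset.dvd_sum fun x _ => ⟨(W x).val * (W x).val, by simp; ring⟩

/-- Through each of the four points of an odd block passes a second odd block, which gives more
than four odd blocks; divisibility by `4` does the rest. -/
lemma eight_le_card_odd (hB : IsS24 Finset.univ B) (hW : ∑ x, W x = 0)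
    (hne : (odd B W).Nonempty) : 8 ≤ (odd B W).card := by
  obtain ⟨b, hb⟩ := hne
  have hbB := (Finset.mem_filter.1 hb).1
  have hex : ∀ x ∈ b, ∃ c ∈ odd B W, x ∈ c ∧ c ≠ b := by
    intro x hx
    have hb' : b ∈ (odd B W).filter (x ∈ ·) := Finset.mem_filter.2 ⟨hb, hx⟩
    have h1 : 1 < ((odd B W).filter (x ∈ ·)).card := by
      obtain ⟨r, hr⟩ := even_odd_pencil hB hW x
      have := Finset.card_pos.2 ⟨b, hb'⟩
      omega
    obtain ⟨c, hc, hcb⟩ := Finset.exists_mem_ne h1 b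
    rw [Finset.mem_filter] at hc
    exact ⟨c, hc.1, hc.2, hcb⟩
  choose! f hf using hex
  have hinj : Set.InjOn f b := by
    intro x hx y hy hxy
    by_contra hne
    exact (hf x hx).2.2 (eq_of_two hB (Finset.mem_filter.1 (hf x hx).1).1 hbB hne (hf x hx).2.1
      (hxy ▸ (hf y hy).2.1) hx hy)
  have hsub : b.image f ⊆ (odd B W).erase b := by
    intro c hc
    obtain ⟨x, hx, rfl⟩ := Finset.mem_image.1 hc
    exact Finset.mem_erase.2 ⟨(hf x hx).2.2, (hf x hx).1⟩
  have h4 := Finset.card_le_card hsub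
  rw [Finset.card_image_of_injOn hinj, (hB.1 b hbB).2, Finset.card_erase_of_mem hb] at h4
  obtain ⟨k, hk⟩ := four_dvd_card_odd hB hW
  omega

end

end Design16

namespace Design16

/-! ### Parallelism and coordinates -/

section

variable {B : Finset (Finset (Fin 16))}

/-- The parallel postulate: of the five blocks through `x ∉ b`, exactly four meet `b`. -/
lemma exists_unique_disjoint (hB : IsS24 Finset.univ B)
    {b : Finset (Fin 16)} (hb : b ∈ B) {x : Fin 16} (hx : x ∉ b) :
    ∃! c, c ∈ B ∧ x ∈ c ∧ Disjoint b c := by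
  have hj : ∀ y ∈ b, ∃ c ∈ B, x ∈ c ∧ y ∈ c := fun y hy =>
    exists_join hB (ne_of_mem_of_not_mem hy hx).symm
  choose! f hf using hj
  have hinj : Set.InjOn f b := by
    intro y hy z hz hyz
    by_contra hne
    have := eq_of_two hB (hf y hy).1 hb hne (hf y hy).2.2 (hyz ▸ (hf z hz).2.2) hy hz
    exact hx (this ▸ (hf y hy).2.1)
  have hsub : b.image f ⊆ B.filter (x ∈ ·) := by
    intro c hc
    obtain ⟨y, hy, rfl⟩ := Finset.mem_image.1 hc
    exact Finset.mem_filter.2 ⟨(hf y hy).1, (hf y hy).2.1⟩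
  have h1 : ((B.filter (x ∈ ·)) \ b.image f).card = 1 := by
    rw [Finset.card_sdiff_of_subset hsub, Finset.card_image_of_injOn hinj, card_pencil hB,
      (hB.1 b hb).2]
  have hiff : ∀ c, c ∈ B ∧ x ∈ c ∧ Disjoint b c ↔ c ∈ (B.filter (x ∈ ·)) \ b.image f := by
    intro c
    rw [Finset.mem_sdiff, Finset.mem_filter, and_assoc]
    refine and_congr_right fun hc => and_congr_right fun hxc => ?_
    constructor
    · intro hd h
      obtain ⟨y, hy, rfl⟩ := Finset.mem_image.1 h
      exact Finset.disjoint_left.1 hd hy (hf y hy).2.2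
    · intro h
      refine Finset.disjoint_left.2 fun y hy hyc => h (Finset.mem_image.2 ⟨y, hy, ?_⟩)
      exact eq_of_two hB (hf y hy).1 hc (ne_of_mem_of_not_mem hy hx) (hf y hy).2.2
        (hf y hy).2.1 hyc hxc
  obtain ⟨c, hc⟩ := Finset.card_eq_one.1 h1
  refine ⟨c, (hiff c).2 (by rw [hc]; exact Finset.mem_singleton_self c), fun d hd => ?_⟩
  have := (hiff d).1 hd
  rw [hc] at this
  exact Finset.mem_singleton.1 this

/-- Each point is on exactly one block of each parallel class. -/
lemma exists_unique_par (hB : IsS24 Finset.univ B) {b : Finset (Fin 16)} (hb : b ∈ B) (x : Fin 16) :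
    ∃! c, c ∈ B ∧ x ∈ c ∧ (b = c ∨ Disjoint b c) := by
  by_cases hx : x ∈ b
  · refine ⟨b, ⟨hb, hx, Or.inl rfl⟩, ?_⟩
    rintro c ⟨-, hxc, rfl | hd⟩
    · rfl
    · exact absurd hxc (Finset.disjoint_left.1 hd hx)
  · obtain ⟨c, ⟨h1, h2, h3⟩, hu⟩ := exists_unique_disjoint hB hb hx
    refine ⟨c, ⟨h1, h2, Or.inr h3⟩, ?_⟩
    rintro d ⟨hd, hxd, rfl | hdd⟩
    · exact absurd hxd hx
    · exact hu d ⟨hd, hxd, hdd⟩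

/-- Given two distinct blocks `A`, `D` through `o`, the points of `D` label the parallel class of
`A`: there is a map to `Fin 4` whose fibres are the blocks parallel to `A` and which restricts
to the inverse of a given enumeration `d` of `D`. -/
lemma exists_direction (hB : IsS24 Finset.univ B)
    {A D : Finset (Fin 16)} (hA : A ∈ B) (hD : D ∈ B) (hAD : A ≠ D)
    {o : Fin 16} (hoA : o ∈ A) (hoD : o ∈ D) (d : Fin 4 → Fin 16) (hd : Function.Injective d)
    (hdD : ∀ i, d i ∈ D) (hdsurj : ∀ x ∈ D, ∃ i, d i = x) :
    ∃ r : Fin 16 → Fin 4, (∀ i, r (d i) = i) ∧ ∃ c : Fin 4 → Finset (Fin 16),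
      (∀ i, c i ∈ B ∧ (A = c i ∨ Disjoint A (c i))) ∧ ∀ i x, r x = i ↔ x ∈ c i := by
  have hex := fun x => (exists_unique_par hB hA x).exists
  choose p hp using hex
  have hun : ∀ x c, c ∈ B → x ∈ c → (A = c ∨ Disjoint A c) → c = p x := fun x c h1 h2 h3 =>
    (exists_unique_par hB hA x).unique ⟨h1, h2, h3⟩ (hp x)
  -- a block parallel to `A` cannot be parallel to `D`, as `A` and `D` meet in `o`
  have hmeet : ∀ x, ∃ i, d i ∈ p x := by
    intro x
    by_contra hno
    have hdis : Disjoint (p x) D := by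
      refine Finset.disjoint_right.2 fun y hy hyp => hno ?_
      obtain ⟨i, rfl⟩ := hdsurj y hy
      exact ⟨i, hyp⟩
    apply hAD
    refine (exists_unique_par hB (hp x).1 o).unique ⟨hA, hoA, ?_⟩ ⟨hD, hoD, Or.inr hdis⟩
    rcases (hp x).2.2 with h | h
    · exact Or.inl h.symm
    · exact Or.inr h.symm
  have huniq : ∀ x i j, d i ∈ p x → d j ∈ p x → i = j := by
    intro x i j hi hj
    by_contra hne
    have hpD : p x = D := eq_of_two hB (hp x).1 hD (hd.ne hne) hi hj (hdD i) (hdD j)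
    rcases (hp x).2.2 with h | h
    · exact hAD (h.trans hpD)
    · rw [hpD] at h
      exact Finset.disjoint_left.1 h hoA hoD
  choose r hr using hmeet
  refine ⟨r, fun i => huniq _ _ _ (hr _) (hp _).2.1, fun i => p (d i),
    fun i => ⟨(hp _).1, (hp _).2.2⟩, fun i x => ?_⟩
  constructor
  · rintro rfl
    change x ∈ p (d (r x))
    rw [← hun (d (r x)) (p x) (hp x).1 (hr x) (hp x).2.2]
    exact (hp x).2.1
  · intro hx
    have h := hun x _ (hp (d i)).1 hx (hp (d i)).2.2
    exact huniq x _ _ (hr x) (h ▸ (hp (d i)).2.1)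

/-- Coordinates for the plane: two maps to `Fin 4` whose fibres are blocks (the rows and the
columns), such that the diagonal is a block as well. -/
lemma exists_coordinates (hB : IsS24 Finset.univ B) : ∃ r s : Fin 16 → Fin 4,
    (∀ x y, r x = r y → s x = s y → x = y) ∧
    (∀ i, ∃ b ∈ B, ∀ x, r x = i ↔ x ∈ b) ∧ (∀ i, ∃ b ∈ B, ∀ x, s x = i ↔ x ∈ b) ∧
    ∃ b ∈ B, ∀ x, r x = s x → x ∈ b := by
  obtain ⟨A, hA, A', hA', D, hD, hne⟩ := Finset.two_lt_card.1
    (show 2 < (B.filter ((0 : Fin 16) ∈ ·)).card by rw [card_pencil hB]; norm_num)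
  obtain ⟨hAA', hAD, hA'D⟩ := hne
  rw [Finset.mem_filter] at hA hA' hD
  have e := D.equivFinOfCardEq (hB.1 D hD.1).2
  set d : Fin 4 → Fin 16 := fun i => (e.symm i : Fin 16) with hd
  have hdinj : Function.Injective d := Subtype.val_injective.comp e.symm.injective
  have hdD : ∀ i, d i ∈ D := fun i => (e.symm i).2
  have hds : ∀ x ∈ D, ∃ i, d i = x := fun x hx => ⟨e ⟨x, hx⟩, by simp [hd]⟩
  obtain ⟨r, hrd, c, hc, hrc⟩ := exists_direction hB hA.1 hD.1 hAD hA.2 hD.2 d hdinj hdD hds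
  obtain ⟨s, hsd, c', hc', hsc⟩ := exists_direction hB hA'.1 hD.1 hA'D hA'.2 hD.2 d hdinj hdD hds
  have hinj : ∀ x y, r x = r y → s x = s y → x = y := by
    intro x y h1 h2
    by_contra hne
    have heq : c (r y) = c' (s y) := eq_of_two hB (hc _).1 (hc' _).1 hne ((hrc _ _).1 h1)
      ((hrc _ _).1 rfl) ((hsc _ _).1 h2) ((hsc _ _).1 rfl)
    have h1 := (hc (r y)).2
    have h2 := (hc' (s y)).2
    rw [← heq] at h2
    refine hAA' ((exists_unique_par hB (hc (r y)).1 0).unique ⟨hA.1, hA.2, ?_⟩ ⟨hA'.1, hA'.2, ?_⟩)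
    · exact h1.imp Eq.symm fun h => h.symm
    · exact h2.imp Eq.symm fun h => h.symm
  refine ⟨r, s, hinj, fun i => ⟨c i, (hc i).1, hrc i⟩, fun i => ⟨c' i, (hc' i).1, hsc i⟩,
    D, hD.1, fun x hx => ?_⟩
  have : x = d (r x) := hinj _ _ (hrd _).symm (by rw [hsd, hx])
  rw [this]
  exact hdD _

end

end Design16

namespace Design16

/-! ### The dual code -/

/-- The additive group of the field with four elements `0, 1, ω, ω + 1`, where the pair `(a, b)`
stands for `a + b ω`. -/
abbrev F4 : Type := ZMod 2 × ZMod 2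

/-- Multiplication of the field with four elements, with `ω ^ 2 = ω + 1`. -/
def mul4 (x y : F4) : F4 := (x.1 * y.1 + x.2 * y.2, x.1 * y.2 + x.2 * y.1 + x.2 * y.2)

/-- The identification of `Fin 4` with the field with four elements. -/
def el : Fin 4 → F4 := ![(0, 0), (1, 0), (0, 1), (1, 1)]

/-- The map `(x, y) ↦ (x, y, x y)`; its components generate, together with the constants, the
functions that sum to zero over every line of the affine plane over the field with four
elements. -/
def phi (i j : Fin 4) : F4 × F4 × F4 := (el i, el j, mul4 (el i) (el j))

/-- Collinearity of the points `(i, j)`, `(i', j')`, `(i'', j'')`. -/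
def Coll (i j i' j' i'' j'' : Fin 4) : Prop :=
  mul4 (el i' - el i) (el j'' - el j) = mul4 (el i'' - el i) (el j' - el j)

instance (i j i' j' i'' j'' : Fin 4) : Decidable (Coll i j i' j' i'' j'') := by
  unfold Coll; infer_instance

lemma card_coll_le : ∀ i j i' j' : Fin 4, ¬ (i = i' ∧ j = j') →
    ((Finset.univ : Finset (Fin 4 × Fin 4)).filter fun q => Coll i j i' j' q.1 q.2).card ≤ 4 := by
  decide +kernel

lemma mul4_collinear : ∀ a b a' b' a'' b'' : F4,
    mul4 a b + mul4 a' b' + mul4 a'' b'' + mul4 (a + a' + a'') (b + b' + b'') = 0 →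
      mul4 (a' - a) (b'' - b) = mul4 (a'' - a) (b' - b) := by
  intro a b a' b' a'' b''
  simp only [mul4, Prod.ext_iff, Prod.fst_add, Prod.snd_add, Prod.fst_sub, Prod.snd_sub,
    Prod.fst_zero, Prod.snd_zero]
  rintro ⟨h, h'⟩
  constructor <;> grind

lemma coll_of_phi_sum {i j i' j' i'' j'' k l : Fin 4}
    (h : phi i j + phi i' j' + phi i'' j'' + phi k l = 0) : Coll i j i' j' i'' j'' := by
  simp only [phi, Prod.mk_add_mk, Prod.mk_eq_zero] at h
  obtain ⟨h1, h2, h3⟩ := h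
  have hneg : ∀ a b : F4, a + b = 0 → b = a := by decide
  rw [hneg _ _ h1, hneg _ _ h2] at h3
  exact mul4_collinear _ _ _ _ _ _ h3

/-- `(a, b, c, d)` agrees with `(e, f, g, h)` in at most one position or everywhere. -/
def Agree (a b c d e f g h : Fin 4) : Prop :=
  (a = e ∧ b = f ∨ a = e ∧ c = g ∨ a = e ∧ d = h ∨ b = f ∧ c = g ∨ b = f ∧ d = h ∨ c = g ∧ d = h) →
    a = e ∧ b = f ∧ c = g ∧ d = h

instance (a b c d e f g h : Fin 4) : Decidable (Agree a b c d e f g h) := by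
  unfold Agree; infer_instance

/-- A permutation compatible with the Klein four-group in the sense of `Agree` is even, that is,
an affine map of the field with four elements. -/
lemma phi_sum_of_agree : ∀ a b c d : Fin 4, (a ≠ b ∧ a ≠ c ∧ a ≠ d ∧ b ≠ c ∧ b ≠ d ∧ c ≠ d) →
    (Agree a b c d 0 1 2 3 ∧ Agree a b c d 1 0 3 2 ∧ Agree a b c d 2 3 0 1 ∧
      Agree a b c d 3 2 1 0) → phi 0 a + phi 1 b + phi 2 c + phi 3 d = 0 := by
  decide +kernel

section

variable {B : Finset (Finset (Fin 16))}

/-- In terms of the coordinates `r`, `s`, the block `b` is the graph of `p`. -/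
def IsGraph (r s : Fin 16 → Fin 4) (b : Finset (Fin 16)) (p : Fin 4 → Fin 4) : Prop :=
  (∀ x ∈ b, s x = p (r x)) ∧ ∀ i, ∃ x ∈ b, r x = i

lemma image_eq_univ {b : Finset (Fin 16)} (hb : b.card = 4) {f : Fin 16 → Fin 4}
    (hf : Set.InjOn f b) : b.image f = Finset.univ := by
  apply Finset.eq_univ_of_card
  rw [Finset.card_image_of_injOn hf, hb, Fintype.card_fin]

lemma sum_of_injOn {M : Type} [AddCommMonoid M] {b : Finset (Fin 16)} (hb : b.card = 4)
    {f : Fin 16 → Fin 4} (hf : Set.InjOn f b) (g : Fin 4 → M) :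
    ∑ x ∈ b, g (f x) = ∑ i, g i := by
  rw [← image_eq_univ hb hf, Finset.sum_image hf]

lemma graph_agree (hB : IsS24 Finset.univ B) {r s : Fin 16 → Fin 4}
    (hinj : ∀ x y, r x = r y → s x = s y → x = y) {b c : Finset (Fin 16)} (hb : b ∈ B)
    (hc : c ∈ B) {p q : Fin 4 → Fin 4} (hp : IsGraph r s b p) (hq : IsGraph r s c q) {i j : Fin 4}
    (hij : i ≠ j) (hi : p i = q i) (hj : p j = q j) : p = q := by
  have key : ∀ k, p k = q k → ∃ x, r x = k ∧ x ∈ b ∧ x ∈ c := by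
    intro k hk
    obtain ⟨x, hx, hxk⟩ := hp.2 k
    obtain ⟨y, hy, hyk⟩ := hq.2 k
    have : x = y := hinj x y (hxk.trans hyk.symm) (by rw [hp.1 x hx, hq.1 y hy, hxk, hyk, hk])
    exact ⟨x, hxk, hx, this ▸ hy⟩
  obtain ⟨x, hx, hxb, hxc⟩ := key i hi
  obtain ⟨y, hy, hyb, hyc⟩ := key j hj
  have hxy : x ≠ y := by
    rintro rfl
    exact hij (hx.symm.trans hy)
  have hbc := eq_of_two hB hb hc hxy hxb hyb hxc hyc
  funext k
  obtain ⟨z, hz, rfl⟩ := hp.2 k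
  rw [← hp.1 z hz, hq.1 z (hbc ▸ hz)]

lemma agree_of_graph (hB : IsS24 Finset.univ B) {r s : Fin 16 → Fin 4}
    (hinj : ∀ x y, r x = r y → s x = s y → x = y) {b c : Finset (Fin 16)} (hb : b ∈ B)
    (hc : c ∈ B) {p q : Fin 4 → Fin 4} (hp : IsGraph r s b p) (hq : IsGraph r s c q) :
    Agree (p 0) (p 1) (p 2) (p 3) (q 0) (q 1) (q 2) (q 3) := by
  intro h
  have : p = q := by
    rcases h with h | h | h | h | h | h <;>
      exact graph_agree hB hinj hb hc hp hq (by decide) h.1 h.2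
  rw [this]
  exact ⟨rfl, rfl, rfl, rfl⟩

/-- The coordinates identify the blocks with lines of the affine plane over the field with four
elements: rows, columns, and graphs of even permutations. -/
lemma phi_sum_block (hB : IsS24 Finset.univ B) {r s : Fin 16 → Fin 4}
    (hinj : ∀ x y, r x = r y → s x = s y → x = y)
    (hr : ∀ i, ∃ b ∈ B, ∀ x, r x = i ↔ x ∈ b) (hs : ∀ i, ∃ b ∈ B, ∀ x, s x = i ↔ x ∈ b)
    (hdiag : ∃ b ∈ B, ∀ x, r x = s x → x ∈ b) {b : Finset (Fin 16)} (hb : b ∈ B) :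
    ∑ x ∈ b, phi (r x) (s x) = 0 := by
  have hsurj : ∀ i j, ∃ x, r x = i ∧ s x = j := by
    have hbij : Function.Bijective fun x : Fin 16 => (r x, s x) := by
      rw [Fintype.bijective_iff_injective_and_card]
      refine ⟨fun x y h => hinj x y (Prod.ext_iff.1 h).1 (Prod.ext_iff.1 h).2, by simp⟩
    intro i j
    obtain ⟨x, hx⟩ := hbij.2 (i, j)
    exact ⟨x, (Prod.ext_iff.1 hx).1, (Prod.ext_iff.1 hx).2⟩
  -- a coordinate is constant or injective on each block
  have hfib : ∀ t : Fin 16 → Fin 4, (∀ i, ∃ c ∈ B, ∀ x, t x = i ↔ x ∈ c) → ∀ c ∈ B,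
      (∃ i, ∀ x ∈ c, t x = i) ∨ Set.InjOn t c := by
    intro t ht c hc
    by_cases hin : Set.InjOn t c
    · exact Or.inr hin
    · left
      simp only [Set.InjOn, not_forall] at hin
      obtain ⟨x, hx, y, hy, hxy, hne⟩ := hin
      obtain ⟨c', hc', hmem⟩ := ht (t x)
      have := eq_of_two hB hc hc' hne hx hy ((hmem x).1 rfl) ((hmem y).1 hxy.symm)
      exact ⟨t x, fun z hz => (hmem z).2 (this ▸ hz)⟩
  have hgraph : ∀ c ∈ B, (∃ i, ∀ x ∈ c, r x = i) ∨ (∃ i, ∀ x ∈ c, s x = i) ∨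
      Set.InjOn r c ∧ ∃ p : Fin 4 → Fin 4, Function.Injective p ∧ IsGraph r s c p := by
    intro c hc
    rcases hfib r hr c hc with h | hrc
    · exact Or.inl h
    rcases hfib s hs c hc with h | hsc
    · exact Or.inr (Or.inl h)
    refine Or.inr (Or.inr ⟨hrc, ?_⟩)
    have hq : ∀ i, ∃ x ∈ c, r x = i := fun i =>
      Finset.mem_image.1 (image_eq_univ (hB.1 c hc).2 hrc ▸ Finset.mem_univ i)
    choose q hqc hqr using hq
    refine ⟨fun i => s (q i), fun i j hij => ?_, fun x hx => ?_, fun i => ⟨q i, hqc i, hqr i⟩⟩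
    · rw [← hqr i, ← hqr j, hsc (hqc i) (hqc j) hij]
    · change s x = s (q (r x))
      rw [hrc hx (hqc (r x)) (hqr (r x)).symm, hqr]
  have hjoin : ∀ i j i' j', i ≠ i' → j ≠ j' → ∃ c ∈ B, ∃ p : Fin 4 → Fin 4,
      Function.Injective p ∧ IsGraph r s c p ∧ p i = j ∧ p i' = j' := by
    intro i j i' j' hi hj
    obtain ⟨x, rfl, rfl⟩ := hsurj i j
    obtain ⟨y, rfl, rfl⟩ := hsurj i' j'
    obtain ⟨c, hc, hxc, hyc⟩ := exists_join hB (fun h : x = y => hi (by rw [h]))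
    rcases hgraph c hc with ⟨k, hk⟩ | ⟨k, hk⟩ | ⟨-, p, hp, hg⟩
    · exact absurd ((hk x hxc).trans (hk y hyc).symm) hi
    · exact absurd ((hk x hxc).trans (hk y hyc).symm) hj
    · exact ⟨c, hc, p, hp, hg, (hg.1 x hxc).symm, (hg.1 y hyc).symm⟩
  obtain ⟨D, hD, hDmem⟩ := hdiag
  have hDg : IsGraph r s D id := by
    have h2 : ∀ i, ∃ x ∈ D, r x = i := fun i => by
      obtain ⟨x, h1, h2⟩ := hsurj i i
      exact ⟨x, hDmem x (h1.trans h2.symm), h1⟩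
    refine ⟨fun x hx => ?_, h2⟩
    rcases hgraph D hD with ⟨k, hk⟩ | ⟨k, hk⟩ | ⟨hrD, -⟩
    · obtain ⟨y, hy, hy'⟩ := h2 (k + 1)
      rw [hk y hy] at hy'
      simp at hy'
    · obtain ⟨y, hy, hy'⟩ := hsurj (k + 1) (k + 1)
      rw [hk y (hDmem y (hy.trans hy'.symm))] at hy'
      simp at hy'
    · obtain ⟨y, hy, hy'⟩ := hsurj (r x) (r x)
      rw [hrD hx (hDmem y (hy.trans hy'.symm)) hy.symm, hy', hy]
      rfl
  have hK : ∀ a b c d : Fin 4, a ≠ b → a ≠ c → a ≠ d → b ≠ c → b ≠ d → c ≠ d →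
      ∃ e ∈ B, ∃ p : Fin 4 → Fin 4, IsGraph r s e p ∧ p a = b ∧ p b = a ∧ p c = d ∧ p d = c := by
    intro a b c d hab hac had hbc hbd hcd
    obtain ⟨e, he, p, hp, hg, h1, h2⟩ := hjoin a b b a hab hab.symm
    have hc1 : p c ≠ a := by rw [← h2]; exact hp.ne hbc.symm
    have hc2 : p c ≠ b := by rw [← h1]; exact hp.ne hac.symm
    have hd1 : p d ≠ a := by rw [← h2]; exact hp.ne hbd.symm
    have hd2 : p d ≠ b := by rw [← h1]; exact hp.ne had.symm
    have hcd' : p c ≠ p d := hp.ne hcd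
    have hid : ¬ (p c = c ∧ p d = d) := by
      rintro ⟨h3, h4⟩
      have := graph_agree hB hinj he hD hg hDg hcd h3 h4
      rw [this] at h1
      exact hab h1
    refine ⟨e, he, p, hg, h1, h2, ?_, ?_⟩ <;> omega
  have hb4 := (hB.1 b hb).2
  rcases hgraph b hb with ⟨i, hi⟩ | ⟨i, hi⟩ | ⟨hrb, p, hp, hg⟩
  · have hsb : Set.InjOn s b := fun x hx y hy h => hinj x y ((hi x hx).trans (hi y hy).symm) h
    rw [Finset.sum_congr rfl fun x hx => by rw [hi x hx], sum_of_injOn hb4 hsb fun j => phi i j]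
    clear hi
    revert i
    decide +kernel
  · have hrb : Set.InjOn r b := fun x hx y hy h => hinj x y h ((hi x hx).trans (hi y hy).symm)
    rw [Finset.sum_congr rfl fun x hx => by rw [hi x hx], sum_of_injOn hb4 hrb fun j => phi j i]
    clear hi
    revert i
    decide +kernel
  · rw [Finset.sum_congr rfl fun x hx => by rw [hg.1 x hx],
      sum_of_injOn hb4 hrb fun j => phi j (p j), Fin.sum_univ_four]
    obtain ⟨e1, he1, p1, hg1, h10, h11, h12, h13⟩ := hK 0 1 2 3 (by decide) (by decide)
      (by decide) (by decide) (by decide) (by decide)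
    obtain ⟨e2, he2, p2, hg2, h20, h22, h21, h23⟩ := hK 0 2 1 3 (by decide) (by decide)
      (by decide) (by decide) (by decide) (by decide)
    obtain ⟨e3, he3, p3, hg3, h30, h33, h31, h32⟩ := hK 0 3 1 2 (by decide) (by decide)
      (by decide) (by decide) (by decide) (by decide)
    have a0 := agree_of_graph hB hinj hb hD hg hDg
    have a1 := agree_of_graph hB hinj hb he1 hg hg1
    have a2 := agree_of_graph hB hinj hb he2 hg hg2
    have a3 := agree_of_graph hB hinj hb he3 hg hg3
    rw [h10, h11, h12, h13] at a1
    rw [h20, h21, h22, h23] at a2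
    rw [h30, h31, h32, h33] at a3
    exact phi_sum_of_agree _ _ _ _ ⟨hp.ne (by decide), hp.ne (by decide), hp.ne (by decide),
      hp.ne (by decide), hp.ne (by decide), hp.ne (by decide)⟩ ⟨a0, a1, a2, a3⟩

/-- Two points determine at most four points collinear with them, so a 4-set with vanishing
`phi`-sum is the block through any two of its points. -/
lemma mem_of_phi_sum (hB : IsS24 Finset.univ B) {r s : Fin 16 → Fin 4}
    (hinj : ∀ x y, r x = r y → s x = s y → x = y)
    (hblock : ∀ b ∈ B, ∑ x ∈ b, phi (r x) (s x) = 0) {b : Finset (Fin 16)} (hb4 : b.card = 4)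
    (hb : ∑ x ∈ b, phi (r x) (s x) = 0) : b ∈ B := by
  have hcoll : ∀ c : Finset (Fin 16), c.card = 4 → ∑ x ∈ c, phi (r x) (s x) = 0 → ∀ u ∈ c,
      ∀ v ∈ c, u ≠ v → ∀ x ∈ c, Coll (r u) (s u) (r v) (s v) (r x) (s x) := by
    intro c hc4 hc u hu v hv huv x hx
    by_cases hxu : x = u
    · subst hxu
      have : ∀ i j i' j' : Fin 4, Coll i j i' j' i j := by decide +kernel
      exact this _ _ _ _
    by_cases hxv : x = v
    · subst hxv
      exact rfl
    have h1 : (((c.erase u).erase v).erase x).card = 1 := by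
      rw [Finset.card_erase_of_mem (by simp [*]), Finset.card_erase_of_mem (by simp [*, huv.symm]),
        Finset.card_erase_of_mem hu, hc4]
    obtain ⟨z, hz⟩ := Finset.card_eq_one.1 h1
    rw [← Finset.add_sum_erase _ _ hu, ← Finset.add_sum_erase (c.erase u) _ (a := v)
      (by simp [*, huv.symm]), ← Finset.add_sum_erase ((c.erase u).erase v) _ (a := x)
      (by simp [*]), hz, Finset.sum_singleton, ← add_assoc, ← add_assoc] at hc
    exact coll_of_phi_sum hc
  obtain ⟨u, hu, v, hv, huv⟩ := Finset.one_lt_card.1 (show 1 < b.card by omega)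
  obtain ⟨c, hc, huc, hvc⟩ := exists_join hB huv
  let C : Finset (Fin 16) :=
    Finset.univ.filter fun x => Coll (r u) (s u) (r v) (s v) (r x) (s x)
  have hC : C.card ≤ 4 := by
    refine le_trans ?_ (card_coll_le (r u) (s u) (r v) (s v) fun h => huv (hinj u v h.1 h.2))
    refine Finset.card_le_card_of_injOn (fun x => (r x, s x)) ?_ ?_
    · intro x hx
      simpa [C] using hx
    · intro x _ y _ h
      exact hinj x y (Prod.ext_iff.1 h).1 (Prod.ext_iff.1 h).2
  have hbC : b = C := Finset.eq_of_subset_of_card_le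
    (fun x hx => Finset.mem_filter.2 ⟨Finset.mem_univ _, hcoll b hb4 hb u hu v hv huv x hx⟩)
    (hC.trans hb4.ge)
  have hcC : c = C := Finset.eq_of_subset_of_card_le
    (fun x hx => Finset.mem_filter.2 ⟨Finset.mem_univ _,
      hcoll c (hB.1 c hc).2 (hblock c hc) u huc v hvc huv x hx⟩)
    (hC.trans (hB.1 c hc).2.ge)
  rw [hbC, ← hcC]
  exact hc

/-- The blocks are precisely the 4-sets that meet evenly every set meeting all blocks evenly. -/
lemma exists_detect (hB : IsS24 Finset.univ B) {b : Finset (Fin 16)} (hb4 : b.card = 4)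
    (hb : b ∉ B) : ∃ W : Fin 16 → ZMod 2, (∀ c ∈ B, ∑ x ∈ c, W x = 0) ∧ ∑ x ∈ b, W x = 1 := by
  obtain ⟨r, s, hinj, hr, hs, hdiag⟩ := exists_coordinates hB
  have hblock : ∀ c ∈ B, ∑ x ∈ c, phi (r x) (s x) = 0 := fun c hc =>
    phi_sum_block hB hinj hr hs hdiag hc
  by_contra hno
  push Not at hno
  have key : ∀ f : (F4 × F4 × F4) →+ ZMod 2, f (∑ x ∈ b, phi (r x) (s x)) = 0 := by
    intro f
    have h := hno (fun x => f (phi (r x) (s x))) fun c hc => by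
      rw [← map_sum, hblock c hc, map_zero]
    rw [← map_sum] at h
    exact (zmod2_cases _).resolve_right h
  apply hb
  refine mem_of_phi_sum hB hinj hblock hb4 ?_
  refine Prod.ext (Prod.ext ?_ ?_) (Prod.ext (Prod.ext ?_ ?_) (Prod.ext ?_ ?_))
  · exact key ((AddMonoidHom.fst _ _).comp (AddMonoidHom.fst _ _))
  · exact key ((AddMonoidHom.snd _ _).comp (AddMonoidHom.fst _ _))
  · exact key ((AddMonoidHom.fst _ _).comp ((AddMonoidHom.fst _ _).comp (AddMonoidHom.snd _ _)))
  · exact key ((AddMonoidHom.snd _ _).comp ((AddMonoidHom.fst _ _).comp (AddMonoidHom.snd _ _)))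
  · exact key ((AddMonoidHom.fst _ _).comp ((AddMonoidHom.snd _ _).comp (AddMonoidHom.snd _ _)))
  · exact key ((AddMonoidHom.snd _ _).comp ((AddMonoidHom.snd _ _).comp (AddMonoidHom.snd _ _)))

end

end Design16

namespace Design16

/-! ### Sizes of differences of two systems -/

/-- Each element of the union lies in exactly four of the seven nonempty symmetric differences. -/
lemma card_three {α : Type} [DecidableEq α] (X Y Z : Finset α) :
    X.card + Y.card + Z.card + (symmDiff X Y).card + (symmDiff X Z).card + (symmDiff Y Z).card +
      (symmDiff (symmDiff X Y) Z).card = 4 * (X ∪ Y ∪ Z).card := by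
  have key : ∀ T ⊆ X ∪ Y ∪ Z, T.card = ∑ a ∈ X ∪ Y ∪ Z, if a ∈ T then 1 else 0 := by
    intro T hT
    rw [Finset.sum_boole, Finset.filter_mem_eq_inter, Finset.inter_eq_right.2 hT]
    rfl
  rw [key X, key Y, key Z, key (symmDiff X Y), key (symmDiff X Z), key (symmDiff Y Z),
    key (symmDiff (symmDiff X Y) Z), Finset.card_eq_sum_ones, Finset.mul_sum]
  · simp only [← Finset.sum_add_distrib]
    refine Finset.sum_congr rfl fun a ha => ?_
    simp only [Finset.mem_union] at ha
    simp only [Finset.mem_symmDiff]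
    by_cases h1 : a ∈ X <;> by_cases h2 : a ∈ Y <;> by_cases h3 : a ∈ Z <;> simp_all
  all_goals
    intro a ha
    simp only [Finset.mem_symmDiff, Finset.mem_union] at ha ⊢
    tauto

section

variable {P Q : Finset (Finset (Fin 16))}

/-- The blocks of `P \ Q`, seen as coordinates, carry a binary code in which every weight is a
multiple of `4`, every nonzero weight is at least `8`, and no coordinate vanishes identically.
Such a code of dimension `1` has length at least `8` and divisible by `4`; in dimension `2` the
length is even and at least `12`; in dimension at least `3` it is at least `14`. -/
lemma card_sdiff_cases (hP : IsS24 Finset.univ P) (hQ : IsS24 Finset.univ Q) :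
    (P \ Q).card = 0 ∨ (P \ Q).card = 8 ∨ (P \ Q).card = 12 ∨ 14 ≤ (P \ Q).card := by
  have hsub : ∀ W : Fin 16 → ZMod 2, (∀ c ∈ Q, ∑ x ∈ c, W x = 0) → odd P W ⊆ P \ Q := by
    intro W hW b hb
    rw [odd, Finset.mem_filter] at hb
    refine Finset.mem_sdiff.2 ⟨hb.1, fun hbQ => ?_⟩
    rw [hW b hbQ] at hb
    exact zero_ne_one hb.2
  have hdet : ∀ b ∈ P \ Q, ∃ W : Fin 16 → ZMod 2, (∀ c ∈ Q, ∑ x ∈ c, W x = 0) ∧ b ∈ odd P W := by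
    intro b hb
    rw [Finset.mem_sdiff] at hb
    obtain ⟨W, hW, hbW⟩ := exists_detect hQ (hP.1 b hb.1).2 hb.2
    exact ⟨W, hW, Finset.mem_filter.2 ⟨hb.1, hbW⟩⟩
  have hadd : ∀ W W' : Fin 16 → ZMod 2, (∀ c ∈ Q, ∑ x ∈ c, W x = 0) →
      (∀ c ∈ Q, ∑ x ∈ c, W' x = 0) → ∀ c ∈ Q, ∑ x ∈ c, (W + W') x = 0 := by
    intro W W' h h' c hc
    simp only [Pi.add_apply, Finset.sum_add_distrib, h c hc, h' c hc, add_zero]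
  have hfour : ∀ W : Fin 16 → ZMod 2, (∀ c ∈ Q, ∑ x ∈ c, W x = 0) → 4 ∣ (odd P W).card :=
    fun W hW => four_dvd_card_odd hP (sum_eq_zero_of_odd_empty hQ hW)
  have height : ∀ W : Fin 16 → ZMod 2, (∀ c ∈ Q, ∑ x ∈ c, W x = 0) → ∀ b ∈ odd P W,
      8 ≤ (odd P W).card :=
    fun W hW b hb => eight_le_card_odd hP (sum_eq_zero_of_odd_empty hQ hW) ⟨b, hb⟩
  rcases (P \ Q).eq_empty_or_nonempty with h0 | ⟨b₁, hb₁⟩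
  · exact Or.inl (Finset.card_eq_zero.2 h0)
  by_contra hno
  push Not at hno
  obtain ⟨-, hn8, hn12, hlt⟩ := hno
  obtain ⟨W₁, hW₁, h1⟩ := hdet b₁ hb₁
  have w1 := height W₁ hW₁ b₁ h1
  obtain ⟨k1, d1⟩ := hfour W₁ hW₁
  have hX : ∃ b ∈ P \ Q, b ∉ odd P W₁ := by
    by_contra hall
    push Not at hall
    have := (hsub W₁ hW₁).antisymm hall
    rw [this] at d1 w1
    omega
  obtain ⟨b₂, hb₂, h21⟩ := hX
  obtain ⟨W₂, hW₂, h22⟩ := hdet b₂ hb₂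
  have hW₁₂ := hadd W₁ W₂ hW₁ hW₂
  have w2 := height W₂ hW₂ b₂ h22
  have w12 := height _ hW₁₂ b₂ (by
    rw [odd_add, Finset.mem_symmDiff]; exact Or.inr ⟨h22, h21⟩)
  obtain ⟨k2, d2⟩ := hfour W₂ hW₂
  obtain ⟨k12, d12⟩ := hfour _ hW₁₂
  have hun2 : (odd P W₁ ∪ odd P W₂) ⊆ P \ Q := Finset.union_subset (hsub _ hW₁) (hsub _ hW₂)
  have hle2 := Finset.card_le_card hun2
  have e2 := card_three (odd P W₁) (odd P W₂) ∅
  -- the case of two sets is the case of three with the third one empty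
  have hbot : ∀ T : Finset (Finset (Fin 16)), symmDiff T ∅ = T := symmDiff_bot
  rw [hbot, hbot, hbot, Finset.card_empty, Finset.union_empty, ← odd_add] at e2
  have hY : ∃ b ∈ P \ Q, b ∉ odd P W₁ ∪ odd P W₂ := by
    by_contra hall
    push Not at hall
    have := hun2.antisymm hall
    rw [this] at e2
    omega
  obtain ⟨b₃, hb₃, h3⟩ := hY
  rw [Finset.notMem_union] at h3
  obtain ⟨W₃, hW₃, h33⟩ := hdet b₃ hb₃
  have w3 := height W₃ hW₃ b₃ h33
  have w13 := height _ (hadd W₁ W₃ hW₁ hW₃) b₃ (by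
    rw [odd_add, Finset.mem_symmDiff]; exact Or.inr ⟨h33, h3.1⟩)
  have w23 := height _ (hadd W₂ W₃ hW₂ hW₃) b₃ (by
    rw [odd_add, Finset.mem_symmDiff]; exact Or.inr ⟨h33, h3.2⟩)
  have w123 := height _ (hadd _ W₃ hW₁₂ hW₃) b₃ (by
    rw [odd_add, odd_add, Finset.mem_symmDiff, Finset.mem_symmDiff]
    exact Or.inr ⟨h33, fun h => h.elim (fun h => h3.1 h.1) (fun h => h3.2 h.1)⟩)
  have e3 := card_three (odd P W₁) (odd P W₂) (odd P W₃)
  rw [← odd_add, ← odd_add, ← odd_add, ← odd_add] at e3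
  have hle3 := Finset.card_le_card (Finset.union_subset hun2 (hsub _ hW₃))
  omega

/-- If `P \ Q` has only eight blocks, it is a minimum weight word, so every point is on an even
number of its blocks. -/
lemma even_pencil_of_card_eight (hP : IsS24 Finset.univ P) (hQ : IsS24 Finset.univ Q)
    (h8 : (P \ Q).card = 8) (x : Fin 16) :
    Even ((P \ Q).filter (x ∈ ·)).card := by
  obtain ⟨b, hb⟩ := Finset.card_pos.1 (show 0 < (P \ Q).card by omega)
  rw [Finset.mem_sdiff] at hb
  obtain ⟨W, hW, hbW⟩ := exists_detect hQ (hP.1 b hb.1).2 hb.2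
  have h0 := sum_eq_zero_of_odd_empty hQ hW
  have hsub : odd P W ⊆ P \ Q := by
    intro c hc
    rw [odd, Finset.mem_filter] at hc
    refine Finset.mem_sdiff.2 ⟨hc.1, fun hcQ => ?_⟩
    rw [hW c hcQ] at hc
    exact zero_ne_one hc.2
  have hge := eight_le_card_odd hP h0 ⟨b, Finset.mem_filter.2 ⟨hb.1, hbW⟩⟩
  rw [← Finset.eq_of_subset_of_card_le hsub (h8.trans_le hge)]
  exact even_odd_pencil hP h0 x

/-! ### Three systems -/

/-- On a block of `P \ Q` at most one point is on more than two blocks of `P \ Q`: otherwise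
there would be more than eight blocks meeting it. -/
lemma unique_heavy (hP : IsS24 Finset.univ P) (hQ : IsS24 Finset.univ Q)
    (h8 : (P \ Q).card = 8) {A : Finset (Fin 16)} (hA : A ∈ P \ Q) {a a' : Fin 16}
    (ha : a ∈ A) (ha' : a' ∈ A) (h4 : 3 ≤ ((P \ Q).filter (a ∈ ·)).card)
    (h4' : 3 ≤ ((P \ Q).filter (a' ∈ ·)).card) : a = a' := by
  by_contra hne
  have hAP := (Finset.mem_sdiff.1 hA).1
  have hcard : ∀ y ∈ A, (((P \ Q).erase A).filter (y ∈ ·)).card + 1 =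
      ((P \ Q).filter (y ∈ ·)).card := by
    intro y hy
    rw [Finset.filter_erase]
    exact Finset.card_erase_add_one (Finset.mem_filter.2 ⟨hA, hy⟩)
  have hpos : ∀ y ∈ A, 2 ≤ ((P \ Q).filter (y ∈ ·)).card := by
    intro y hy
    obtain ⟨k, hk⟩ := even_pencil_of_card_eight hP hQ h8 y
    have : 0 < ((P \ Q).filter (y ∈ ·)).card :=
      Finset.card_pos.2 ⟨A, Finset.mem_filter.2 ⟨hA, hy⟩⟩
    omega
  have hsum : ∑ y ∈ A, (((P \ Q).erase A).filter (y ∈ ·)).card ≤ 7 := by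
    rw [← Finset.card_biUnion]
    · refine (Finset.card_le_card (Finset.biUnion_subset.2 fun y _ =>
        Finset.filter_subset _ _)).trans ?_
      rw [Finset.card_erase_of_mem hA, h8]
    · intro y hy z hz hyz
      refine Finset.disjoint_left.2 fun c hc hc' => ?_
      simp only [Finset.mem_filter, Finset.mem_erase, Finset.mem_sdiff] at hc hc'
      exact hc.1.1 (eq_of_two hP hc.1.2.1 hAP hyz hc.2 hc'.2 hy hz)
  have ha'' : a' ∈ A.erase a := Finset.mem_erase.2 ⟨Ne.symm hne, ha'⟩
  rw [← Finset.add_sum_erase _ _ ha, ← Finset.add_sum_erase _ _ ha''] at hsum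
  have hrest : 2 ≤ ∑ y ∈ (A.erase a).erase a', (((P \ Q).erase A).filter (y ∈ ·)).card := by
    have hc2 : ((A.erase a).erase a').card = 2 := by
      rw [Finset.card_erase_of_mem ha'', Finset.card_erase_of_mem ha, (hP.1 A hAP).2]
    calc 2 = ∑ y ∈ (A.erase a).erase a', 1 := by rw [← Finset.card_eq_sum_ones, hc2]
      _ ≤ _ := Finset.sum_le_sum fun y hy => by
        have hyA := Finset.mem_of_mem_erase (Finset.mem_of_mem_erase hy)
        have := hcard y hyA
        have := hpos y hyA
        omega
  have e1 := hcard a ha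
  have e2 := hcard a' ha'
  obtain ⟨k, hk⟩ := even_pencil_of_card_eight hP hQ h8 a
  obtain ⟨k', hk'⟩ := even_pencil_of_card_eight hP hQ h8 a'
  omega

/-- The blocks of `P` joining `b` to points of a block `c ∈ Q \ P` are not in `Q`. If `y`, `z` on
`c` span a block `A` of `P` missing `b`, the joins of `b` with `y` and `z` are different. -/
lemma three_le_pencil (hP : IsS24 Finset.univ P) (hQ : IsS24 Finset.univ Q)
    {c A C : Finset (Fin 16)} (hc : c ∈ Q \ P) (hA : A ∈ P) (hC : C ∈ P \ Q)
    {b y z : Fin 16} (hyz : y ≠ z) (hyc : y ∈ c) (hzc : z ∈ c) (hbc : b ∈ c) (hyA : y ∈ A)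
    (hzA : z ∈ A) (hbA : b ∉ A) (hbC : b ∈ C) (hyC : y ∉ C) (hzC : z ∉ C) :
    3 ≤ ((P \ Q).filter (b ∈ ·)).card := by
  rw [Finset.mem_sdiff] at hc
  have key : ∀ t ∈ c, t ∈ A → ∃ d ∈ P \ Q, b ∈ d ∧ t ∈ d := by
    intro t htc htA
    have hbt : b ≠ t := (ne_of_mem_of_not_mem htA hbA).symm
    obtain ⟨d, hd, hbd, htd⟩ := exists_join hP hbt
    refine ⟨d, Finset.mem_sdiff.2 ⟨hd, fun hdQ => hc.2 ?_⟩, hbd, htd⟩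
    rw [eq_of_two hQ hc.1 hdQ hbt hbc htc hbd htd]
    exact hd
  obtain ⟨d, hd, hbd, hyd⟩ := key y hyc hyA
  obtain ⟨e, he, hbe, hze⟩ := key z hzc hzA
  have hde : d ≠ e := by
    rintro rfl
    have := eq_of_two hP (Finset.mem_sdiff.1 hd).1 hA hyz hyd hze hyA hzA
    exact hbA (this ▸ hbd)
  refine Finset.two_lt_card.2 ⟨C, Finset.mem_filter.2 ⟨hC, hbC⟩, d, Finset.mem_filter.2 ⟨hd, hbd⟩,
    e, Finset.mem_filter.2 ⟨he, hbe⟩, ?_, ?_, hde⟩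
  · rintro rfl
    exact hyC hyd
  · rintro rfl
    exact hzC hze

/-- Let `A`, `C` be the only blocks of `P \ Q` through `x`. The two blocks of `Q \ P` through `x`
redistribute the points of `A` and `C`: one of them is `A` with a point `a` replaced by a point
`b` of `C`, and both `a` and `b` are on more than two blocks of `P \ Q`. -/
lemma exists_switch (hP : IsS24 Finset.univ P) (hQ : IsS24 Finset.univ Q)
    {x : Fin 16} {A C : Finset (Fin 16)} (hAC : A ≠ C)
    (hx : (P \ Q).filter (x ∈ ·) = {A, C}) :
    ∃ a ∈ A, ∃ b ∈ C, 3 ≤ ((P \ Q).filter (a ∈ ·)).card ∧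
      3 ≤ ((P \ Q).filter (b ∈ ·)).card ∧ insert b (A.erase a) ∈ Q \ P := by
  have hA : A ∈ (P \ Q).filter (x ∈ ·) := by rw [hx]; simp
  have hC : C ∈ (P \ Q).filter (x ∈ ·) := by rw [hx]; simp
  rw [Finset.mem_filter] at hA hC
  obtain ⟨hA, hxA⟩ := hA
  obtain ⟨hC, hxC⟩ := hC
  have hAP := (Finset.mem_sdiff.1 hA).1
  have hCP := (Finset.mem_sdiff.1 hC).1
  have hA4 := (hP.1 A hAP).2
  have hC4 := (hP.1 C hCP).2
  have hdisj : ∀ y, y ≠ x → y ∈ A → y ∉ C := fun y hyx hyA hyC =>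
    hAC (eq_of_two hP hAP hCP hyx hyA hxA hyC hxC)
  have hN : ((Q \ P).filter (x ∈ ·)).card = 2 := by
    have e1 : ((P \ Q).filter (x ∈ ·)).card + ((P ∩ Q).filter (x ∈ ·)).card = 5 := by
      rw [← card_pencil hP x, ← Finset.card_union_of_disjoint, ← Finset.filter_union,
        Finset.sdiff_union_inter]
      exact Finset.disjoint_filter_filter (Finset.disjoint_sdiff_inter P Q)
    have e2 : ((Q \ P).filter (x ∈ ·)).card + ((Q ∩ P).filter (x ∈ ·)).card = 5 := by
      rw [← card_pencil hQ x, ← Finset.card_union_of_disjoint, ← Finset.filter_union,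
        Finset.sdiff_union_inter]
      exact Finset.disjoint_filter_filter (Finset.disjoint_sdiff_inter Q P)
    rw [hx, Finset.card_pair hAC] at e1
    rw [Finset.inter_comm Q P] at e2
    omega
  obtain ⟨c, c', hcc', hcs⟩ := Finset.card_eq_two.1 hN
  have hc : c ∈ (Q \ P).filter (x ∈ ·) := by rw [hcs]; simp
  have hc' : c' ∈ (Q \ P).filter (x ∈ ·) := by rw [hcs]; simp
  rw [Finset.mem_filter] at hc hc'
  have hcov : ∀ d, d ∈ Q \ P ∧ x ∈ d → d ⊆ A ∪ C := by
    rintro d ⟨hd, hxd⟩ y hy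
    rw [Finset.mem_sdiff] at hd
    by_cases hyx : y = x
    · rw [hyx]; exact Finset.mem_union_left _ hxA
    obtain ⟨e, he, hye, hxe⟩ := exists_join hP hyx
    have heM : e ∈ (P \ Q).filter (x ∈ ·) := by
      refine Finset.mem_filter.2 ⟨Finset.mem_sdiff.2 ⟨he, fun heQ => hd.2 ?_⟩, hxe⟩
      rw [eq_of_two hQ hd.1 heQ hyx hy hxd hye hxe]
      exact he
    rw [hx, Finset.mem_insert, Finset.mem_singleton] at heM
    rcases heM with rfl | rfl
    · exact Finset.mem_union_left _ hye
    · exact Finset.mem_union_right _ hye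
  have hsplit : ∀ d, d ∈ Q \ P ∧ x ∈ d → (d.erase x ∩ A).card + (d.erase x ∩ C).card = 3 := by
    rintro d hd
    rw [← Finset.card_union_of_disjoint, ← Finset.inter_union_distrib_left,
      Finset.inter_eq_left.2 ((Finset.erase_subset _ _).trans (hcov d hd)),
      Finset.card_erase_of_mem hd.2, (hQ.1 d (Finset.mem_sdiff.1 hd.1).1).2]
    refine Finset.disjoint_left.2 fun y hy hy' => ?_
    simp only [Finset.mem_inter, Finset.mem_erase] at hy hy'
    exact hdisj y hy.1.1 hy.2 hy'.2
  have hne3 : ∀ T ∈ P, T.card = 4 → ∀ d, d ∈ Q \ P ∧ x ∈ d → x ∈ T →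
      (d.erase x ∩ T).card ≤ 2 := by
    intro T hT hT4 d hd hxT
    by_contra hlt
    have hd4 := (hQ.1 d (Finset.mem_sdiff.1 hd.1).1).2
    have h3 : (d.erase x).card = 3 := by rw [Finset.card_erase_of_mem hd.2, hd4]
    have hsub : d.erase x ⊆ T := by
      rw [← Finset.inter_eq_left]
      exact Finset.eq_of_subset_of_card_le Finset.inter_subset_left (by omega)
    have : d = T := by
      apply Finset.eq_of_subset_of_card_le
      · rw [← Finset.insert_erase hd.2]
        exact Finset.insert_subset hxT hsub
      · rw [hT4, hd4]
    exact (Finset.mem_sdiff.1 hd.1).2 (this ▸ hT)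
  have hmeet : ∀ y, y ≠ x → y ∈ c → y ∉ c' := fun y hyx hy hy' => hcc'
    (eq_of_two hQ (Finset.mem_sdiff.1 hc.1).1 (Finset.mem_sdiff.1 hc'.1).1 hyx hy hc.2 hy' hc'.2)
  have htot : ∀ T : Finset (Fin 16), T.card = 4 → x ∈ T →
      (c.erase x ∩ T).card + (c'.erase x ∩ T).card ≤ 3 := by
    intro T hT hxT
    rw [← Finset.card_union_of_disjoint]
    · have : c.erase x ∩ T ∪ c'.erase x ∩ T ⊆ T.erase x := by
        intro y hy
        simp only [Finset.mem_union, Finset.mem_inter, Finset.mem_erase] at hy ⊢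
        tauto
      have := Finset.card_le_card this
      rwa [Finset.card_erase_of_mem hxT, hT] at this
    · refine Finset.disjoint_left.2 fun y hy hy' => ?_
      simp only [Finset.mem_inter, Finset.mem_erase] at hy hy'
      exact hmeet y hy.1.1 hy.1.2 hy'.1.2
  -- the block with two points on `A` plays the role of `c`, the one with two points on `C` of `c'`
  have core : ∀ d d', d ∈ Q \ P ∧ x ∈ d → d' ∈ Q \ P ∧ x ∈ d' →
      (∀ y, y ≠ x → y ∈ d → y ∉ d') → (d.erase x ∩ A).card = 2 → (d.erase x ∩ C).card = 1 →
      (d'.erase x ∩ A).card = 1 → (d'.erase x ∩ C).card = 2 →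
      ∃ a ∈ A, ∃ b ∈ C, 3 ≤ ((P \ Q).filter (a ∈ ·)).card ∧
        3 ≤ ((P \ Q).filter (b ∈ ·)).card ∧ insert b (A.erase a) ∈ Q \ P := by
    intro d d' hd hd' hdd h1 h2 h3 h4
    obtain ⟨y, z, hyz, hdA⟩ := Finset.card_eq_two.1 h1
    obtain ⟨b, hdC⟩ := Finset.card_eq_one.1 h2
    obtain ⟨a, hdA'⟩ := Finset.card_eq_one.1 h3
    obtain ⟨u, v, huv, hdC'⟩ := Finset.card_eq_two.1 h4
    have my : y ∈ d.erase x ∩ A := by rw [hdA]; simp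
    have mz : z ∈ d.erase x ∩ A := by rw [hdA]; simp
    have mb : b ∈ d.erase x ∩ C := by rw [hdC]; simp
    have ma : a ∈ d'.erase x ∩ A := by rw [hdA']; simp
    have mu : u ∈ d'.erase x ∩ C := by rw [hdC']; simp
    have mv : v ∈ d'.erase x ∩ C := by rw [hdC']; simp
    simp only [Finset.mem_inter, Finset.mem_erase] at my mz mb ma mu mv
    refine ⟨a, ma.2, b, mb.2, ?_, ?_, ?_⟩
    · exact three_le_pencil hP hQ hd'.1 hCP hA huv mu.1.2 mv.1.2 ma.1.2 mu.2 mv.2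
        (hdisj a ma.1.1 ma.2) ma.2 (fun h => hdisj u mu.1.1 h mu.2)
        (fun h => hdisj v mv.1.1 h mv.2)
    · exact three_le_pencil hP hQ hd.1 hAP hC hyz my.1.2 mz.1.2 mb.1.2 my.2 mz.2
        (fun h => hdisj b mb.1.1 h mb.2) mb.2 (hdisj y my.1.1 my.2) (hdisj z mz.1.1 mz.2)
    · have hbA : b ∉ A := fun h => hdisj b mb.1.1 h mb.2
      have hd4 := (hQ.1 d (Finset.mem_sdiff.1 hd.1).1).2
      have had : a ∉ d := fun h => hdd a ma.1.1 h ma.1.2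
      have : d = insert b (A.erase a) := by
        apply Finset.eq_of_subset_of_card_le
        · intro t ht
          by_cases htx : t = x
          · subst htx
            exact Finset.mem_insert_of_mem (Finset.mem_erase.2 ⟨Ne.symm ma.1.1, hxA⟩)
          rcases Finset.mem_union.1 (hcov d hd ht) with h | h
          · refine Finset.mem_insert_of_mem (Finset.mem_erase.2 ⟨?_, h⟩)
            rintro rfl
            exact had ht
          · have : t ∈ d.erase x ∩ C := Finset.mem_inter.2 ⟨Finset.mem_erase.2 ⟨htx, ht⟩, h⟩
            rw [hdC, Finset.mem_singleton] at this
            rw [this]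
            exact Finset.mem_insert_self _ _
        · rw [Finset.card_insert_of_notMem fun h => hbA (Finset.mem_of_mem_erase h),
            Finset.card_erase_of_mem ma.2, hA4, hd4]
      rw [← this]
      exact hd.1
  have s1 := hsplit c hc
  have s2 := hsplit c' hc'
  have t1 := htot A hA4 hxA
  have t2 := htot C hC4 hxC
  have u1 := hne3 A hAP hA4 c hc hxA
  have u2 := hne3 A hAP hA4 c' hc' hxA
  have u3 := hne3 C hCP hC4 c hc hxC
  have u4 := hne3 C hCP hC4 c' hc' hxC
  by_cases h2 : (c.erase x ∩ A).card = 2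
  · exact core c c' hc hc' hmeet h2 (by omega) (by omega) (by omega)
  · exact core c' c hc' hc (fun y hy h h' => hmeet y hy h' h) (by omega) (by omega) (by omega)
      (by omega)

end

/-- In the block `insert b (A.erase a)` of `exists_switch`, the points `a` and `b` are the only heavy
points of `A` and `C`, so this block depends on `P \ Q` only. As `P \ Q = P \ R`, it would be
common to `Q` and `R` without being in `P`. -/
lemma not_three {P Q R : Finset (Finset (Fin 16))} (hP : IsS24 Finset.univ P)
    (hQ : IsS24 Finset.univ Q) (hR : IsS24 Finset.univ R) (h1 : P ∩ Q = P ∩ R)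
    (h2 : P ∩ Q = Q ∩ R) (h8 : (P \ Q).card = 8) : False := by
  have hM : P \ R = P \ Q := by
    rw [← Finset.sdiff_inter_self_left P R, ← h1, Finset.sdiff_inter_self_left]
  have hev := even_pencil_of_card_eight hP hQ h8
  obtain ⟨L, hL⟩ := Finset.card_pos.1 (show 0 < (P \ Q).card by omega)
  obtain ⟨x, hxL, hx⟩ : ∃ x ∈ L, ((P \ Q).filter (x ∈ ·)).card = 2 := by
    obtain ⟨y, hy, z, hz, hyz⟩ := Finset.one_lt_card.1
      (show 1 < L.card by rw [(hP.1 L (Finset.mem_sdiff.1 hL).1).2]; norm_num)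
    by_contra hno
    push Not at hno
    have h3 : ∀ t ∈ L, 3 ≤ ((P \ Q).filter (t ∈ ·)).card := by
      intro t ht
      obtain ⟨k, hk⟩ := hev t
      have := hno t ht
      have : 0 < ((P \ Q).filter (t ∈ ·)).card :=
        Finset.card_pos.2 ⟨L, Finset.mem_filter.2 ⟨hL, ht⟩⟩
      omega
    exact hyz (unique_heavy hP hQ h8 hL hy hz (h3 y hy) (h3 z hz))
  obtain ⟨A, C, hAC, hxs⟩ := Finset.card_eq_two.1 hx
  have hA : A ∈ P \ Q := (Finset.mem_filter.1 (show A ∈ (P \ Q).filter (x ∈ ·) by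
    rw [hxs]; simp)).1
  have hC : C ∈ P \ Q := (Finset.mem_filter.1 (show C ∈ (P \ Q).filter (x ∈ ·) by
    rw [hxs]; simp)).1
  obtain ⟨a, ha, b, hb, ha3, hb3, hs⟩ := exists_switch hP hQ hAC hxs
  obtain ⟨a', ha', b', hb', ha3', hb3', hs'⟩ := exists_switch hP hR hAC (hM ▸ hxs)
  rw [hM] at ha3' hb3'
  rw [← unique_heavy hP hQ h8 hA ha ha' ha3 ha3', ← unique_heavy hP hQ h8 hC hb hb' hb3 hb3'] at hs'
  rw [Finset.mem_sdiff] at hs hs'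
  have : insert b (A.erase a) ∈ P ∩ Q := by
    rw [h2]; exact Finset.mem_inter.2 ⟨hs.1, hs'.1⟩
  exact hs.2 (Finset.mem_inter.1 this).1

lemma J3_subset {k : ℕ} (hk : k ∈ J3 16) : k ≤ 6 ∨ k = 8 ∨ k = 20 := by
  obtain ⟨P, Q, R, hP, hQ, hR, ⟨h1, h2⟩, rfl⟩ := hk
  have hsub : P ∩ Q ⊆ R := by
    rw [h1]; exact Finset.inter_subset_right
  rw [Finset.inter_eq_left.2 hsub]
  have hc := Finset.card_sdiff_add_card_inter P Q
  rw [card_blocks hP] at hc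
  rcases card_sdiff_cases hP hQ with h | h | h | h
  · omega
  · exact (not_three hP hQ hR h1 h2 h).elim
  · omega
  · omega

end Design16


/-- `J_3[16] = I_3[16] \ {7,9,10,11,12}`, i.e. `J_3[16] = {0,…,6,8,20}`. -/
theorem stmt4 : J3 16 = I3 16 \ ({7, 9, 10, 11, 12} : Set ℕ) ∧
    J3 16 = ({0, 1, 2, 3, 4, 5, 6, 8, 20} : Set ℕ) := by
  open Design16 in
  have h : J3 16 = ({0, 1, 2, 3, 4, 5, 6, 8, 20} : Set ℕ) := by
    ext k
    simp only [Set.mem_insert_iff, Set.mem_singleton_iff]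
    constructor
    · intro hk
      have := J3_subset hk
      omega
    · rintro (rfl | rfl | rfl | rfl | rfl | rfl | rfl | rfl | rfl)
      exacts [mem0, mem1, mem2, mem3, mem4, mem5, mem6, mem8, mem20]
  refine ⟨?_, h⟩
  rw [h]
  have hb : steinerBlockCount 16 = 20 := rfl
  ext k
  simp only [I3, hb, Set.mem_insert_iff, Set.mem_singleton_iff, Set.mem_sdiff, Set.mem_ofPred_eq]
  omega
end

section
/- The set {0, 23, 29, 50} is contained in J_3[25]; that is, for each k ∈ {0, 23, 29, 50} there exist three S(2,4,25) designs on a common 25-element point set whose pairwise intersections coincide and have cardinality k. -/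
/-- The point set coded by a natural number: the positions, below 25, of its binary digits `1`. -/
def maskBlock (m : ℕ) : Finset (Fin 25) :=
  Finset.univ.filter fun i => m.testBit i = true

theorem mem_maskBlock {m : ℕ} {i : Fin 25} : i ∈ maskBlock m ↔ m.testBit i = true := by
  simp [maskBlock]

theorem maskBlock_injOn : Set.InjOn maskBlock {m | m < 2 ^ 25} := by
  intro a ha b hb h
  apply Nat.eq_of_testBit_eq
  intro i
  by_cases hi : i < 25
  · have := Finset.ext_iff.mp h ⟨i, hi⟩
    rw [mem_maskBlock, mem_maskBlock] at this
    exact Bool.eq_iff_iff.mpr this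
  · have hle : 2 ^ 25 ≤ 2 ^ i := Nat.pow_le_pow_right (by norm_num) (by omega)
    rw [Nat.testBit_lt_two_pow (lt_of_lt_of_le ha hle),
      Nat.testBit_lt_two_pow (lt_of_lt_of_le hb hle)]

/-- The set of blocks coded by a list of masks. -/
def design (L : List ℕ) : Finset (Finset (Fin 25)) :=
  L.toFinset.image maskBlock

/-- A list of masks codes an `S(2,4,25)`: all masks are below `2 ^ 25`, all blocks have four
points, and for any two distinct points exactly one entry of the list contains both. -/
def IsDesignCode (L : List ℕ) : Prop :=
  (∀ m ∈ L, m < 2 ^ 25 ∧ (maskBlock m).card = 4) ∧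
  ∀ x y : Fin 25, x ≠ y → (L.filter fun m => m.testBit x && m.testBit y).length = 1

instance (L : List ℕ) : Decidable (IsDesignCode L) := by
  unfold IsDesignCode
  infer_instance

theorem isS24_design {L : List ℕ} (h : IsDesignCode L) : IsS24 Finset.univ (design L) := by
  refine ⟨?_, ?_⟩
  · intro b hb
    obtain ⟨m, hm, rfl⟩ := Finset.mem_image.mp hb
    exact ⟨Finset.subset_univ _, (h.1 m (List.mem_toFinset.mp hm)).2⟩
  · intro x y _ _ hxy
    obtain ⟨a, ha⟩ := List.length_eq_one_iff.mp (h.2 x y hxy)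
    have key : ∀ m, (m ∈ L ∧ x ∈ maskBlock m ∧ y ∈ maskBlock m) ↔ m = a := by
      intro m
      have hm : m ∈ (L.filter fun m => m.testBit x && m.testBit y) ↔ m = a := by simp [ha]
      rw [← hm, List.mem_filter, Bool.and_eq_true, mem_maskBlock, mem_maskBlock]
    obtain ⟨haL, hax, hay⟩ := (key a).mpr rfl
    refine ⟨maskBlock a, ⟨Finset.mem_image_of_mem _ (List.mem_toFinset.mpr haL), hax, hay⟩, ?_⟩
    rintro b ⟨hb, hbx, hby⟩
    obtain ⟨m, hm, rfl⟩ := Finset.mem_image.mp hb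
    rw [(key m).mp ⟨List.mem_toFinset.mp hm, hbx, hby⟩]

/-- Since distinct masks below `2 ^ 25` code distinct blocks, intersections of designs are
computed on masks. -/
theorem design_inter {L M : List ℕ} (hL : IsDesignCode L) (hM : IsDesignCode M) :
    design L ∩ design M = design (L ∩ M) := by
  unfold design
  rw [List.toFinset_inter, Finset.image_inter_of_injOn]
  refine maskBlock_injOn.mono ?_
  rintro m (hm | hm)
  · exact (hL.1 m (List.mem_toFinset.mp hm)).1
  · exact (hM.1 m (List.mem_toFinset.mp hm)).1

theorem card_design {L : List ℕ} (hlt : ∀ m ∈ L, m < 2 ^ 25) (hnd : L.Nodup) :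
    (design L).card = L.length := by
  unfold design
  rw [Finset.card_image_of_injOn, List.toFinset_card_of_nodup hnd]
  exact maskBlock_injOn.mono fun m hm => hlt m (List.mem_toFinset.mp hm)

/-- The common intersection is given as a list `C`, contained in all three codes; the pairwise
intersections may list the masks of `C` in any order. -/
theorem mem_J3_of_codes {k : ℕ} (L M N C : List ℕ)
    (hL : IsDesignCode L) (hM : IsDesignCode M) (hN : IsDesignCode N)
    (hC : C.Nodup ∧ C.length = k ∧ ∀ m ∈ C, m ∈ L ∧ m ∈ M ∧ m ∈ N)
    (hLM : ∀ m ∈ L ∩ M, m ∈ C) (hLN : ∀ m ∈ L ∩ N, m ∈ C) (hMN : ∀ m ∈ M ∩ N, m ∈ C) :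
    k ∈ J3 25 := by
  obtain ⟨hnd, hlen, hsub⟩ := hC
  have aux : ∀ {P Q : List ℕ}, IsDesignCode P → IsDesignCode Q → (∀ m ∈ P ∩ Q, m ∈ C) →
      (∀ m ∈ C, m ∈ P ∧ m ∈ Q) → design P ∩ design Q = design C := by
    intro P Q hP hQ h₁ h₂
    rw [design_inter hP hQ]
    unfold design
    congr 1
    ext m
    rw [List.mem_toFinset, List.mem_toFinset]
    exact ⟨h₁ m, fun h => List.mem_inter_iff.mpr (h₂ m h)⟩
  have eLM := aux hL hM hLM fun m h => ⟨(hsub m h).1, (hsub m h).2.1⟩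
  have eLN := aux hL hN hLN fun m h => ⟨(hsub m h).1, (hsub m h).2.2⟩
  have eMN := aux hM hN hMN fun m h => (hsub m h).2
  refine ⟨design L, design M, design N, isS24_design hL, isS24_design hM, isS24_design hN,
    ⟨eLM.trans eLN.symm, eLM.trans eMN.symm⟩, ?_⟩
  have hCN : design C ⊆ design N := eMN ▸ Finset.inter_subset_right
  rw [eLM, Finset.inter_eq_left.mpr hCN,
    card_design (fun m h => (hL.1 m (hsub m h).1).1) hnd, hlen]

/-- The masks of the images of the given blocks under the map `f` on points. -/
def codes (f : ℕ → ℕ) (blocks : List (List ℕ)) : List ℕ :=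
  blocks.map fun b => (b.map fun i => 2 ^ f i).sum

/-- The 23 blocks missing the points `1, 2, 7, 12` in each design used for the value `23`. -/
def commonBlocks : List (List ℕ) :=
  [[0, 3, 8, 10], [0, 4, 14, 23], [0, 5, 15, 24], [0, 6, 13, 22], [0, 16, 17, 18],
   [0, 19, 20, 21], [3, 4, 17, 19], [3, 5, 11, 14], [3, 13, 15, 18], [4, 6, 9, 18],
   [4, 15, 20, 22], [5, 6, 8, 17], [5, 13, 21, 23], [6, 10, 11, 20], [6, 14, 19, 24],
   [8, 9, 13, 19], [8, 16, 20, 23], [9, 10, 15, 23], [9, 17, 21, 24], [10, 14, 18, 21],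
   [10, 16, 22, 24], [11, 15, 16, 19], [11, 17, 22, 23]]

/-- The 27 blocks of the base design that meet `{1, 2, 7, 12}`. -/
def tradeA : List (List ℕ) :=
  [[0, 1, 2, 7], [0, 9, 11, 12], [1, 3, 23, 24], [1, 4, 11, 13], [1, 5, 9, 16],
   [1, 6, 15, 21], [1, 8, 18, 22], [1, 10, 12, 19], [1, 14, 17, 20], [2, 3, 6, 16],
   [2, 4, 5, 10], [2, 8, 11, 21], [2, 9, 14, 22], [2, 12, 15, 17], [2, 13, 20, 24],
   [2, 18, 19, 23], [3, 7, 9, 20], [3, 12, 21, 22], [4, 7, 16, 21], [4, 8, 12, 24],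
   [5, 7, 19, 22], [5, 12, 18, 20], [6, 7, 12, 23], [7, 8, 14, 15], [7, 10, 13, 17],
   [7, 11, 18, 24], [12, 13, 14, 16]]

/-- Another decomposition into blocks of the pairs covered by `tradeA`. -/
def tradeB : List (List ℕ) :=
  [[0, 1, 7, 12], [0, 2, 9, 11], [1, 2, 10, 17], [1, 3, 6, 23], [1, 4, 5, 16],
   [1, 8, 15, 21], [1, 9, 14, 20], [1, 11, 13, 24], [1, 18, 19, 22], [2, 3, 21, 22],
   [2, 4, 8, 24], [2, 5, 18, 20], [2, 6, 12, 15], [2, 7, 19, 23], [2, 13, 14, 16],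
   [3, 7, 20, 24], [3, 9, 12, 16], [4, 7, 10, 13], [4, 11, 12, 21], [5, 7, 9, 22],
   [5, 10, 12, 19], [6, 7, 16, 21], [7, 8, 11, 18], [7, 14, 15, 17], [8, 12, 14, 22],
   [12, 13, 17, 20], [12, 18, 23, 24]]

/-- The block list of the base design. -/
def baseBlocks : List (List ℕ) := commonBlocks ++ tradeA

/-- The 3-cycle `(0 1 2)`. -/
def threeCycle : ℕ → ℕ
  | 0 => 1
  | 1 => 2
  | 2 => 0
  | n => n

/-- The 4-cycle `(1 2 12 7)`. -/
def fourCycle : ℕ → ℕ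
  | 1 => 2
  | 2 => 12
  | 12 => 7
  | 7 => 1
  | n => n

theorem isDesignCode_base : IsDesignCode (codes id baseBlocks) := by
  decide +kernel

theorem zero_mem : 0 ∈ J3 25 := by
  refine mem_J3_of_codes (codes id baseBlocks) (codes (fun i => (i + 2) % 25) baseBlocks)
    (codes (fun i => (i + 4) % 25) baseBlocks) [] isDesignCode_base ?_ ?_ ?_ ?_ ?_ ?_ <;>
  decide +kernel

theorem twentyThree_mem : 23 ∈ J3 25 := by
  refine mem_J3_of_codes (codes id baseBlocks) (codes id (commonBlocks ++ tradeB))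
    (codes fourCycle baseBlocks) (codes id commonBlocks) isDesignCode_base ?_ ?_ ?_ ?_ ?_ ?_ <;>
  decide +kernel

theorem twentyNine_mem : 29 ∈ J3 25 := by
  refine mem_J3_of_codes (codes id baseBlocks) (codes threeCycle baseBlocks)
    (codes (threeCycle ∘ threeCycle) baseBlocks)
    (codes id baseBlocks ∩ codes threeCycle baseBlocks) isDesignCode_base ?_ ?_ ?_ ?_ ?_ ?_ <;>
  decide +kernel

theorem fifty_mem : 50 ∈ J3 25 := by
  refine mem_J3_of_codes (codes id baseBlocks) (codes id baseBlocks) (codes id baseBlocks)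
    (codes id baseBlocks) isDesignCode_base isDesignCode_base isDesignCode_base ?_ ?_ ?_ ?_ <;>
  decide +kernel

/-- `{0, 23, 29, 50} ⊆ J_3[25]`. -/
theorem stmt5 : ({0, 23, 29, 50} : Set ℕ) ⊆ J3 25 := by
  rintro k (rfl | rfl | rfl | rfl)
  exacts [zero_mem, twentyThree_mem, twentyNine_mem, fifty_mem]
end

section
/- For each i ∈ {0, 1, 2, 4, 16} there exist three 4-GDDs of type 4^4 on a common 16-element point set with the same group partition, whose block sets have pairwise-coincident intersections of cardinality i. -/
/-- `Gs` is a partition of the (finite) point type into `u` groups each of size `g`. -/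
def IsGroupPartition {α : Type} [DecidableEq α] (Gs : Finset (Finset α)) (u g : ℕ) : Prop :=
  Gs.card = u ∧ (∀ G ∈ Gs, G.card = g) ∧ ∀ x : α, ∃! G, G ∈ Gs ∧ x ∈ G

/-- `A` is the block set of a 4-GDD with group set `Gs`: blocks have size 4, meet each
group in at most one point, and every pair of points from distinct groups lies in
exactly one block. -/
def IsGDD4 {α : Type} [DecidableEq α] (Gs : Finset (Finset α)) (A : Finset (Finset α)) : Prop :=
  (∀ b ∈ A, b.card = 4) ∧
  (∀ b ∈ A, ∀ G ∈ Gs, (b ∩ G).card ≤ 1) ∧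
  ∀ G1 ∈ Gs, ∀ G2 ∈ Gs, G1 ≠ G2 → ∀ x ∈ G1, ∀ y ∈ G2,
    ∃! b, b ∈ A ∧ x ∈ b ∧ y ∈ b

/-- Element `k` of group `g`, encoded as the point `4 * g + k`. -/
def point44 (g k : Fin 4) : Fin 16 := ⟨4 * g.val + k.val, by omega⟩

/-- The group `{4 * g, …, 4 * g + 3}`. -/
def group44 (g : Fin 4) : Finset (Fin 16) := Finset.univ.image (point44 g)

/-- The four groups of size four. -/
def groups44 : Finset (Finset (Fin 16)) := Finset.univ.image group44

/-- The block `{(0, x), (1, p y), (2, q (x + y)), (3, r (x + ωy))}`, where `v = (x, y)`. -/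
def block44 (p q r : Fin 4 → Fin 4) (v : Fin 4 × Fin 4) : Finset (Fin 16) :=
  {point44 0 v.1, point44 1 (p v.2), point44 2 (q (v.1 ^^^ v.2)),
    point44 3 (r (v.1 ^^^ ![0, 2, 3, 1] v.2))}

/-- The sixteen blocks of the standard GDD with groups 1, 2, 3 relabelled by `p`, `q`, `r`. -/
def blocks44 (p q r : Fin 4 → Fin 4) : Finset (Finset (Fin 16)) :=
  Finset.univ.image (block44 p q r)

theorem existsUnique_of_card_filter {β : Type} {s : Finset β} {P : β → Prop} [DecidablePred P]
    (h : (s.filter P).card = 1) : ∃! b, b ∈ s ∧ P b := by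
  obtain ⟨b, hb⟩ := Finset.card_eq_one.mp h
  have hmem : ∀ c, (c ∈ s ∧ P c) ↔ c = b := fun c => by
    rw [← Finset.mem_filter, hb, Finset.mem_singleton]
  exact ⟨b, (hmem b).mpr rfl, fun c hc => (hmem c).mp hc⟩

theorem isGDD4_of_card {p q r : Fin 4 → Fin 4}
    (hcard : ∀ v, (block44 p q r v).card = 4)
    (hgroup : ∀ v g, (block44 p q r v ∩ group44 g).card ≤ 1)
    (hpair : ∀ g h, g ≠ h → ∀ j k,
      ((blocks44 p q r).filter fun b => point44 g j ∈ b ∧ point44 h k ∈ b).card = 1) :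
    IsGDD4 groups44 (blocks44 p q r) := by
  refine ⟨?_, ?_, ?_⟩
  · intro b hb
    obtain ⟨v, -, rfl⟩ := Finset.mem_image.mp hb
    exact hcard v
  · intro b hb G hG
    obtain ⟨v, -, rfl⟩ := Finset.mem_image.mp hb
    obtain ⟨g, -, rfl⟩ := Finset.mem_image.mp hG
    exact hgroup v g
  · intro G1 h1 G2 h2 hne x hx y hy
    obtain ⟨g, -, rfl⟩ := Finset.mem_image.mp h1
    obtain ⟨h, -, rfl⟩ := Finset.mem_image.mp h2
    obtain ⟨j, -, rfl⟩ := Finset.mem_image.mp hx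
    obtain ⟨k, -, rfl⟩ := Finset.mem_image.mp hy
    exact existsUnique_of_card_filter (hpair g h (fun e => hne (e ▸ rfl)) j k)

theorem isGroupPartition_groups44 : IsGroupPartition groups44 4 4 := by
  have hsize : ∀ g, (group44 g).card = 4 := by decide +kernel
  have hcard : ∀ x : Fin 16, (groups44.filter fun G => x ∈ G).card = 1 := by decide +kernel
  refine ⟨by decide +kernel, ?_, fun x => existsUnique_of_card_filter (hcard x)⟩
  simpa [groups44] using hsize

theorem isGDD4_standard : IsGDD4 groups44 (blocks44 id id id) :=
  isGDD4_of_card (by decide +kernel) (by decide +kernel) (by decide +kernel)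

/-- for each `i ∈ {0,1,2,4,16}` there exist three 4-GDDs of type `4^4`
on a common 16-element point set with the same groups, whose block sets have
pairwise-coincident intersections of cardinality `i`. -/
theorem stmt7 : ∀ i ∈ ({0, 1, 2, 4, 16} : Set ℕ),
    ∃ (Gs A1 A2 A3 : Finset (Finset (Fin 16))),
      IsGroupPartition Gs 4 4 ∧
      IsGDD4 Gs A1 ∧ IsGDD4 Gs A2 ∧ IsGDD4 Gs A3 ∧
      CoincidentInts A1 A2 A3 ∧ (A1 ∩ A2 ∩ A3).card = i := by
  intro i hi
  simp only [Set.mem_insert_iff, Set.mem_singleton_iff] at hi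
  rcases hi with rfl | rfl | rfl | rfl | rfl
  · exact ⟨groups44, blocks44 id id id, blocks44 id id ![1, 0, 3, 2],
      blocks44 id id ![2, 3, 0, 1],
      isGroupPartition_groups44, isGDD4_standard,
      isGDD4_of_card (by decide +kernel) (by decide +kernel) (by decide +kernel),
      isGDD4_of_card (by decide +kernel) (by decide +kernel) (by decide +kernel),
      ⟨by decide +kernel, by decide +kernel⟩,
      by decide +kernel⟩
  · exact ⟨groups44, blocks44 id id id, blocks44 id ![0, 2, 3, 1] ![0, 2, 3, 1],
      blocks44 id ![0, 3, 1, 2] ![0, 3, 1, 2],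
      isGroupPartition_groups44, isGDD4_standard,
      isGDD4_of_card (by decide +kernel) (by decide +kernel) (by decide +kernel),
      isGDD4_of_card (by decide +kernel) (by decide +kernel) (by decide +kernel),
      ⟨by decide +kernel, by decide +kernel⟩,
      by decide +kernel⟩
  · exact ⟨groups44, blocks44 id id id, blocks44 id ![0, 1, 3, 2] ![0, 2, 3, 1],
      blocks44 ![0, 3, 2, 1] id ![0, 3, 1, 2],
      isGroupPartition_groups44, isGDD4_standard,
      isGDD4_of_card (by decide +kernel) (by decide +kernel) (by decide +kernel),
      isGDD4_of_card (by decide +kernel) (by decide +kernel) (by decide +kernel),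
      ⟨by decide +kernel, by decide +kernel⟩,
      by decide +kernel⟩
  · exact ⟨groups44, blocks44 id id id, blocks44 id id ![0, 2, 3, 1],
      blocks44 id id ![0, 3, 1, 2],
      isGroupPartition_groups44, isGDD4_standard,
      isGDD4_of_card (by decide +kernel) (by decide +kernel) (by decide +kernel),
      isGDD4_of_card (by decide +kernel) (by decide +kernel) (by decide +kernel),
      ⟨by decide +kernel, by decide +kernel⟩,
      by decide +kernel⟩
  · exact ⟨groups44, blocks44 id id id, blocks44 id id id, blocks44 id id id,
      isGroupPartition_groups44, isGDD4_standard, isGDD4_standard, isGDD4_standard,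
      ⟨rfl, rfl⟩, by decide +kernel⟩
end

section
/- For each i ∈ {0, 1, 9} there exist three 4-GDDs of type 3^4 on a common 12-element point set with the same group partition, whose block sets have pairwise-coincident intersections of cardinality i. -/
/-- The point of group `g` with label `a`. -/
def gddPoint (g : Fin 4) (a : Fin 3) : Fin 12 := ⟨3 * g.val + a.val, by omega⟩

/-- The groups `{0,1,2}, {3,4,5}, {6,7,8}, {9,10,11}`. -/
def gddGroups : Finset (Finset (Fin 12)) :=
  Finset.univ.image fun g : Fin 4 => Finset.univ.image (gddPoint g)

/-- The blocks coming from the affine squares `(x, y) ↦ a x + b y + e` and `(x, y) ↦ c x + d y`;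
arithmetic in `Fin 3` is modulo 3. -/
def gddBlocks (a b c d e : Fin 3) : Finset (Finset (Fin 12)) :=
  Finset.univ.image fun p : Fin 3 × Fin 3 =>
    {gddPoint 0 p.1, gddPoint 1 p.2, gddPoint 2 (a * p.1 + b * p.2 + e),
      gddPoint 3 (c * p.1 + d * p.2)}

/-- Unique existence of a member of a finset as a cardinality. Evaluating the right-hand side visits
only the members of `A`, whereas `∃!` ranges over all subsets of the point set. -/
theorem existsUnique_iff_card_filter {α : Type} [DecidableEq α] (A : Finset (Finset α))
    (x y : α) : (∃! b, b ∈ A ∧ x ∈ b ∧ y ∈ b) ↔ (A.filter fun b => x ∈ b ∧ y ∈ b).card = 1 := by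
  rw [Finset.card_eq_one_iff_existsUnique]
  simp only [Finset.mem_filter]

theorem gddGroups_isGroupPartition : IsGroupPartition gddGroups 4 3 := by
  have key : ∀ x : Fin 12, (gddGroups.filter fun G => x ∈ G ∧ x ∈ G).card = 1 := by
    decide +kernel
  have card_group : ∀ g : Fin 4, (Finset.univ.image (gddPoint g)).card = 3 := by decide +kernel
  refine ⟨by decide +kernel, Finset.forall_mem_image.2 fun g _ => card_group g, fun x => ?_⟩
  simpa only [and_self] using (existsUnique_iff_card_filter gddGroups x x).2 (key x)

/-- The conditions on the coefficients say that both squares are Latin and that they are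
orthogonal. -/
theorem gddBlocks_isGDD4 (a b c d e : Fin 3) (ha : a ≠ 0) (hb : b ≠ 0) (hc : c ≠ 0) (hd : d ≠ 0)
    (hdet : a * d ≠ b * c) : IsGDD4 gddGroups (gddBlocks a b c d e) := by
  -- Quantifiers over blocks and groups become quantifiers over their indices, which makes the
  -- evaluation small.
  simp only [IsGDD4, existsUnique_iff_card_filter, gddGroups]
  unfold gddBlocks
  simp only [Finset.forall_mem_image, Finset.mem_univ, true_imp_iff]
  refine ⟨?_, ?_, ?_⟩ <;> revert a b c d e <;> decide +kernel

/-- for each `i ∈ {0,1,9}` there exist three 4-GDDs of type `3^4`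
on a common 12-element point set with the same groups, whose block sets have
pairwise-coincident intersections of cardinality `i`. -/
theorem stmt10 : ∀ i ∈ ({0, 1, 9} : Set ℕ),
    ∃ (Gs A1 A2 A3 : Finset (Finset (Fin 12))),
      IsGroupPartition Gs 4 3 ∧
      IsGDD4 Gs A1 ∧ IsGDD4 Gs A2 ∧ IsGDD4 Gs A3 ∧
      CoincidentInts A1 A2 A3 ∧ (A1 ∩ A2 ∩ A3).card = i := by
  have gdd := gddBlocks_isGDD4
  rintro i (rfl | rfl | rfl)
  · exact ⟨gddGroups, gddBlocks 1 1 1 2 0, gddBlocks 1 1 1 2 1, gddBlocks 1 1 1 2 2,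
      gddGroups_isGroupPartition, by apply gdd <;> decide, by apply gdd <;> decide,
      by apply gdd <;> decide, by unfold CoincidentInts; decide +kernel, by decide +kernel⟩
  · exact ⟨gddGroups, gddBlocks 1 1 1 2 0, gddBlocks 2 2 2 1 0, gddBlocks 2 1 1 1 0,
      gddGroups_isGroupPartition, by apply gdd <;> decide, by apply gdd <;> decide,
      by apply gdd <;> decide, by unfold CoincidentInts; decide +kernel, by decide +kernel⟩
  · exact ⟨gddGroups, gddBlocks 1 1 1 2 0, gddBlocks 1 1 1 2 0, gddBlocks 1 1 1 2 0,
      gddGroups_isGroupPartition, by apply gdd <;> decide, by apply gdd <;> decide,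
      by apply gdd <;> decide, ⟨rfl, rfl⟩, by decide +kernel⟩
end

section
/- The set {0, 1, 9} is contained in J_{f3}[13]; that is, for each k ∈ {0, 1, 9} there exist three S(2,4,13) designs on a common 13-element point set and a common point x whose flower F (the set of blocks containing x) is the same in all three designs, such that the block sets have pairwise-coincident intersections and the number of common blocks not in F equals k. -/
/-- The point `x` is `0`; the element `v` of the `i`-th group (`i < 4`) is `1 + 3 i + v`. -/
def groupPoint (i : ℕ) (v : Fin 3) : Fin 13 := Fin.ofNat 13 (1 + 3 * i + v.val)

/-- The blocks of the design built from a translated code. The index `Sum.inl i` gives the block of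
the flower of `0` made of `0` and the `i`-th group. The index `Sum.inr (s, t)` gives the transversal
of the word `(s, t, a s + c t + e, b s + d t + f)`; these words form the row space of `[I | M]`,
where `M` has rows `(a, b)` and `(c, d)`, translated by `(0, 0, e, f)`. -/
def codeBlock (a b c d e f : Fin 3) : Fin 4 ⊕ (Fin 3 × Fin 3) → Finset (Fin 13)
  | Sum.inl i => {0, groupPoint i 0, groupPoint i 1, groupPoint i 2}
  | Sum.inr (s, t) => {groupPoint 0 s, groupPoint 1 t, groupPoint 2 (a * s + c * t + e),
      groupPoint 3 (b * s + d * t + f)}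

/-- The block set of the design on 13 points built from a translated code. -/
def codeDesign (a b c d e f : Fin 3) : Finset (Finset (Fin 13)) :=
  Finset.univ.image (codeBlock a b c d e f)

/-- `IsS24` for an indexed family of blocks, with the quantifier over all sets of points replaced by
one over indices, so that the hypotheses can be decided by evaluation. -/
lemma isS24_image {ι : Type} [Fintype ι] {blk : ι → Finset (Fin 13)}
    (h4 : ∀ i, (blk i).card = 4)
    (h : ∀ x y : Fin 13, x ≠ y →
      ∃ i, (x ∈ blk i ∧ y ∈ blk i) ∧ ∀ j, x ∈ blk j → y ∈ blk j → j = i) :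
    IsS24 Finset.univ (Finset.univ.image blk) := by
  refine ⟨fun b hb => ⟨Finset.subset_univ b, ?_⟩, fun x y _ _ hxy => ?_⟩
  · obtain ⟨i, -, rfl⟩ := Finset.mem_image.mp hb
    exact h4 i
  · obtain ⟨i, hi, huniq⟩ := h x y hxy
    refine ⟨blk i, ⟨Finset.mem_image_of_mem _ (Finset.mem_univ i), hi⟩, ?_⟩
    rintro b ⟨hb, hx, hy⟩
    obtain ⟨j, -, rfl⟩ := Finset.mem_image.mp hb
    rw [huniq j hx hy]

lemma isS24_base : IsS24 Finset.univ (codeDesign 1 1 1 2 0 0) :=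
  isS24_image (by decide +kernel) (by decide +kernel)

lemma isS24_shift_one : IsS24 Finset.univ (codeDesign 1 1 1 2 0 1) :=
  isS24_image (by decide +kernel) (by decide +kernel)

lemma isS24_shift_two : IsS24 Finset.univ (codeDesign 1 1 1 2 0 2) :=
  isS24_image (by decide +kernel) (by decide +kernel)

lemma isS24_neg : IsS24 Finset.univ (codeDesign 2 2 2 1 0 0) :=
  isS24_image (by decide +kernel) (by decide +kernel)

lemma isS24_diag : IsS24 Finset.univ (codeDesign 2 1 1 1 0 0) :=
  isS24_image (by decide +kernel) (by decide +kernel)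

/-- `{0,1,9} ⊆ J_{f3}[13]`: for each such `k` there exist three
`S(2,4,13)` designs and a point `x` whose flower `F` (blocks through `x`) is common
to all three designs, with pairwise-coincident intersections and exactly `k` common
blocks outside `F`. -/
theorem stmt11 : ∀ k ∈ ({0, 1, 9} : Set ℕ),
    ∃ (B1 B2 B3 : Finset (Finset (Fin 13))) (x : Fin 13),
      IsS24 Finset.univ B1 ∧ IsS24 Finset.univ B2 ∧ IsS24 Finset.univ B3 ∧
      (B1.filter fun b => x ∈ b) ⊆ B1 ∩ B2 ∩ B3 ∧
      CoincidentInts B1 B2 B3 ∧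
      ((B1 ∩ B2 ∩ B3) \ (B1.filter fun b => x ∈ b)).card = k := by
  rintro k (rfl | rfl | rfl)
  · exact ⟨codeDesign 1 1 1 2 0 0, codeDesign 1 1 1 2 0 1, codeDesign 1 1 1 2 0 2, 0,
      isS24_base, isS24_shift_one, isS24_shift_two, by decide +kernel,
      ⟨by decide +kernel, by decide +kernel⟩, by decide +kernel⟩
  -- The matrices are `M`, `-M`, and `M` with its diagonal negated.
  · exact ⟨codeDesign 1 1 1 2 0 0, codeDesign 2 2 2 1 0 0, codeDesign 2 1 1 1 0 0, 0,
      isS24_base, isS24_neg, isS24_diag, by decide +kernel,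
      ⟨by decide +kernel, by decide +kernel⟩, by decide +kernel⟩
  · exact ⟨codeDesign 1 1 1 2 0 0, codeDesign 1 1 1 2 0 0, codeDesign 1 1 1 2 0 0, 0,
      isS24_base, isS24_base, isS24_base, by decide +kernel,
      ⟨by decide +kernel, by decide +kernel⟩, by decide +kernel⟩
end

section
/- Filling construction (i): Suppose there exist three 4-GDDs of type g_1 g_2 … g_s on a common point set with the same group partition into groups G_1, …, G_s of sizes g_1, …, g_s, whose block sets have pairwise-coincident intersections of cardinality b. Suppose further that for each i with 1 ≤ i ≤ s there exist three S(2,4,g_i+1) designs on a common (g_i+1)-element point set whose pairwise intersections coincide and have cardinality b_i. Then there exist three S(2,4,(g_1+g_2+⋯+g_s)+1) designs on a common point set whose pairwise intersections coincide and have cardinality b + b_1 + b_2 + ⋯ + b_s. -/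
/-- `A` is the block set of a 4-GDD whose groups are `G 0, …, G (s-1)`: blocks have
size 4, meet each group in at most one point, and every pair of points from distinct
groups lies in exactly one block. -/
def IsGDD4Blocks {α : Type} [DecidableEq α] {s : ℕ} (G : Fin s → Finset α)
    (A : Finset (Finset α)) : Prop :=
  (∀ b ∈ A, b.card = 4) ∧
  (∀ b ∈ A, ∀ i, (b ∩ G i).card ≤ 1) ∧
  ∀ i j : Fin s, i ≠ j → ∀ x ∈ G i, ∀ y ∈ G j, ∃! b, b ∈ A ∧ x ∈ b ∧ y ∈ b

/-- The new blocks of the filling construction: the images under `Fin.succ` of the GDD blocks `A`,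
together with the images under `φ i` of the blocks `D i` of the design filling the `i`-th group. -/
def fillBlocks {n s : ℕ} {g : Fin s → ℕ} (φ : ∀ i, Fin (g i + 1) ↪ Fin (n + 1))
    (A : Finset (Finset (Fin n))) (D : ∀ i, Finset (Finset (Fin (g i + 1)))) :
    Finset (Finset (Fin (n + 1))) :=
  A.map (Finset.mapEmbedding (Fin.succEmb n)).toEmbedding ∪
    Finset.univ.biUnion fun i => (D i).map (Finset.mapEmbedding (φ i)).toEmbedding

/-- `φ i` identifies the points of the `i`-th filling design with `G i ∪ {∞}`, where `∞ = 0`. -/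
def IsFilling {n s : ℕ} {g : Fin s → ℕ} (G : Fin s → Finset (Fin n))
    (φ : ∀ i, Fin (g i + 1) ↪ Fin (n + 1)) : Prop :=
  ∀ i y, (∃ t, φ i t = y) ↔ y = 0 ∨ ∃ x ∈ G i, x.succ = y

/-- All blocks have four points and meet each group in at most one point. Unlike `IsGDD4Blocks`,
this property passes to subfamilies, such as the intersection of two block sets. -/
def IsPartialGDD {n s : ℕ} (G : Fin s → Finset (Fin n)) (A : Finset (Finset (Fin n))) : Prop :=
  ∀ a ∈ A, a.card = 4 ∧ ∀ i, (a ∩ G i).card ≤ 1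

section Filling

variable {n s : ℕ} {g : Fin s → ℕ} {G : Fin s → Finset (Fin n)}
  {φ : ∀ i, Fin (g i + 1) ↪ Fin (n + 1)}

lemma mem_fillBlocks {A : Finset (Finset (Fin n))} {D : ∀ i, Finset (Finset (Fin (g i + 1)))}
    {t : Finset (Fin (n + 1))} :
    t ∈ fillBlocks φ A D ↔
      (∃ a ∈ A, a.map (Fin.succEmb n) = t) ∨ ∃ i, ∃ d ∈ D i, d.map (φ i) = t := by
  simp [fillBlocks]

/-- Two distinct points lie in at most one of the sets `G i ∪ {∞}`. -/
lemma filling_index_unique (hpart : ∀ x, ∃! i, x ∈ G i) (hφ : IsFilling G φ) {i j : Fin s}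
    {x y : Fin (n + 1)} (hxy : x ≠ y) (hxi : ∃ t, φ i t = x) (hyi : ∃ t, φ i t = y)
    (hxj : ∃ t, φ j t = x) (hyj : ∃ t, φ j t = y) : i = j := by
  rw [hφ] at hxi hyi hxj hyj
  -- At least one of the two points is not `∞`, and that point determines the group.
  have key : ∀ z : Fin (n + 1), z ≠ 0 → (z = 0 ∨ ∃ x ∈ G i, x.succ = z) →
      (z = 0 ∨ ∃ x ∈ G j, x.succ = z) → i = j := by
    rintro z hz (h | ⟨u, hu, rfl⟩) (h' | ⟨v, hv, hvu⟩)
    · exact absurd h hz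
    · exact absurd h hz
    · exact absurd h' hz
    · rw [Fin.succ_inj] at hvu
      subst hvu
      exact (hpart v).unique hu hv
  by_cases hx : x = 0
  · exact key y (fun hy => hxy (hx.trans hy.symm)) hyi hyj
  · exact key x hx hxi hxj

/-- A GDD block contains no two distinct points of `G i ∪ {∞}`. -/
lemma not_mem_gdd_of_mem_filling (hφ : IsFilling G φ) {i : Fin s} {a : Finset (Fin n)}
    (ha : (a ∩ G i).card ≤ 1) {x y : Fin (n + 1)} (hxy : x ≠ y)
    (hxi : ∃ t, φ i t = x) (hyi : ∃ t, φ i t = y)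
    (hxa : x ∈ a.map (Fin.succEmb n)) (hya : y ∈ a.map (Fin.succEmb n)) : False := by
  rw [hφ] at hxi hyi
  simp only [Finset.mem_map, Fin.coe_succEmb] at hxa hya
  obtain ⟨u, hu, rfl⟩ := hxa
  obtain ⟨v, hv, rfl⟩ := hya
  simp only [Fin.succ_ne_zero, false_or, Fin.succ_inj, exists_eq_right] at hxi hyi
  exact hxy (congrArg Fin.succ (Finset.card_le_one.1 ha u (by simp [hu, hxi]) v (by simp [hv, hyi])))

lemma exists_two_in_map {i : Fin s} {d : Finset (Fin (g i + 1))} (hd : d.card = 4) :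
    ∃ x y, x ≠ y ∧ x ∈ d.map (φ i) ∧ y ∈ d.map (φ i) := by
  obtain ⟨x, hx, y, hy, h⟩ := Finset.one_lt_card.1 (by rw [Finset.card_map, hd]; norm_num :
    1 < (d.map (φ i)).card)
  exact ⟨x, y, h, hx, hy⟩

lemma exists_of_mem_map {i : Fin s} {d : Finset (Fin (g i + 1))} {x : Fin (n + 1)}
    (hx : x ∈ d.map (φ i)) : ∃ t, φ i t = x := by
  obtain ⟨t, -, h⟩ := Finset.mem_map.1 hx
  exact ⟨t, h⟩

lemma gdd_map_ne_filling_map (hφ : IsFilling G φ) {i : Fin s} {a : Finset (Fin n)}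
    (ha : (a ∩ G i).card ≤ 1) {d : Finset (Fin (g i + 1))} (hd : d.card = 4) :
    a.map (Fin.succEmb n) ≠ d.map (φ i) := by
  intro h
  obtain ⟨x, y, hxy, hx, hy⟩ := exists_two_in_map (φ := φ) hd
  exact not_mem_gdd_of_mem_filling hφ ha hxy (exists_of_mem_map hx) (exists_of_mem_map hy)
    (h ▸ hx) (h ▸ hy)

lemma filling_map_index_unique (hpart : ∀ x, ∃! i, x ∈ G i) (hφ : IsFilling G φ) {i j : Fin s}
    {d : Finset (Fin (g i + 1))} {e : Finset (Fin (g j + 1))} (hd : d.card = 4)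
    (h : d.map (φ i) = e.map (φ j)) : i = j := by
  obtain ⟨x, y, hxy, hx, hy⟩ := exists_two_in_map (φ := φ) hd
  exact filling_index_unique hpart hφ hxy (exists_of_mem_map hx) (exists_of_mem_map hy)
    (exists_of_mem_map (h ▸ hx)) (exists_of_mem_map (h ▸ hy))

lemma fillBlocks_inter (hpart : ∀ x, ∃! i, x ∈ G i) (hφ : IsFilling G φ)
    {A A' : Finset (Finset (Fin n))} {D D' : ∀ i, Finset (Finset (Fin (g i + 1)))}
    (hA : IsPartialGDD G A) (hA' : IsPartialGDD G A') (hD : ∀ i, ∀ d ∈ D i, d.card = 4)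
    (hD' : ∀ i, ∀ d ∈ D' i, d.card = 4) :
    fillBlocks φ A D ∩ fillBlocks φ A' D' =
      fillBlocks φ (A ∩ A') (fun i => D i ∩ D' i) := by
  ext t
  simp only [Finset.mem_inter, mem_fillBlocks]
  constructor
  · rintro ⟨⟨a, ha, rfl⟩ | ⟨i, d, hd, rfl⟩, ⟨a', ha', h⟩ | ⟨j, d', hd', h⟩⟩
    · rw [Finset.map_inj] at h
      subst h
      exact Or.inl ⟨a', ⟨ha, ha'⟩, rfl⟩
    · exact absurd h.symm (gdd_map_ne_filling_map hφ ((hA a ha).2 j) (hD' j d' hd'))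
    · exact absurd h (gdd_map_ne_filling_map hφ ((hA' a' ha').2 i) (hD i d hd))
    · obtain rfl := filling_map_index_unique hpart hφ (hD' j d' hd') h
      rw [Finset.map_inj] at h
      subst h
      exact Or.inr ⟨j, d', ⟨hd, hd'⟩, rfl⟩
  · rintro (⟨a, ⟨ha, ha'⟩, rfl⟩ | ⟨i, d, ⟨hd, hd'⟩, rfl⟩)
    · exact ⟨Or.inl ⟨a, ha, rfl⟩, Or.inl ⟨a, ha', rfl⟩⟩
    · exact ⟨Or.inr ⟨i, d, hd, rfl⟩, Or.inr ⟨i, d, hd', rfl⟩⟩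

lemma card_fillBlocks (hpart : ∀ x, ∃! i, x ∈ G i) (hφ : IsFilling G φ)
    {A : Finset (Finset (Fin n))} {D : ∀ i, Finset (Finset (Fin (g i + 1)))}
    (hA : IsPartialGDD G A) (hD : ∀ i, ∀ d ∈ D i, d.card = 4) :
    (fillBlocks φ A D).card = A.card + ∑ i, (D i).card := by
  rw [fillBlocks, Finset.card_union_of_disjoint, Finset.card_map, Finset.card_biUnion]
  · simp
  · intro i _ j _ hij
    rw [Function.onFun, Finset.disjoint_left]
    intro t ht ht'
    simp only [Finset.mem_map, RelEmbedding.coe_toEmbedding, Finset.mapEmbedding_apply] at ht ht'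
    obtain ⟨d, hd, rfl⟩ := ht
    obtain ⟨e, -, h⟩ := ht'
    exact hij (filling_map_index_unique hpart hφ (hD i d hd) h.symm)
  · rw [Finset.disjoint_left]
    intro t ht ht'
    simp only [Finset.mem_map, Finset.mem_biUnion, Finset.mem_univ, true_and,
      RelEmbedding.coe_toEmbedding, Finset.mapEmbedding_apply] at ht ht'
    obtain ⟨a, ha, rfl⟩ := ht
    obtain ⟨i, d, hd, h⟩ := ht'
    exact gdd_map_ne_filling_map hφ ((hA a ha).2 i) (hD i d hd) h.symm

lemma isPartialGDD_of_isGDD4Blocks {A : Finset (Finset (Fin n))} (hA : IsGDD4Blocks G A) :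
    IsPartialGDD G A :=
  fun a ha => ⟨hA.1 a ha, hA.2.1 a ha⟩

/-- Two distinct points of the enlarged set lie in a common `G i ∪ {∞}` or in distinct groups. -/
lemma same_filling_or_distinct_groups (hpart : ∀ x, ∃! i, x ∈ G i) (hφ : IsFilling G φ)
    {x y : Fin (n + 1)} (hxy : x ≠ y) :
    (∃ i, (∃ t, φ i t = x) ∧ ∃ t, φ i t = y) ∨
      ∃ i j, i ≠ j ∧ ∃ u ∈ G i, ∃ v ∈ G j, x = u.succ ∧ y = v.succ := by
  simp only [hφ _ _]
  rcases Fin.eq_zero_or_eq_succ x with rfl | ⟨u, rfl⟩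
  · rcases Fin.eq_zero_or_eq_succ y with rfl | ⟨v, rfl⟩
    · exact absurd rfl hxy
    · obtain ⟨i, hi, -⟩ := hpart v
      exact Or.inl ⟨i, Or.inl rfl, Or.inr ⟨v, hi, rfl⟩⟩
  · obtain ⟨i, hi, -⟩ := hpart u
    rcases Fin.eq_zero_or_eq_succ y with rfl | ⟨v, rfl⟩
    · exact Or.inl ⟨i, Or.inr ⟨u, hi, rfl⟩, Or.inl rfl⟩
    · obtain ⟨j, hj, -⟩ := hpart v
      by_cases hij : i = j
      · subst hij
        exact Or.inl ⟨i, Or.inr ⟨u, hi, rfl⟩, Or.inr ⟨v, hj, rfl⟩⟩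
      · exact Or.inr ⟨i, j, hij, u, hi, v, hj, rfl, rfl⟩

lemma isS24_fillBlocks (hpart : ∀ x, ∃! i, x ∈ G i) (hφ : IsFilling G φ)
    {A : Finset (Finset (Fin n))} {D : ∀ i, Finset (Finset (Fin (g i + 1)))}
    (hA : IsGDD4Blocks G A) (hD : ∀ i, IsS24 Finset.univ (D i)) :
    IsS24 Finset.univ (fillBlocks φ A D) := by
  refine ⟨fun t ht => ⟨Finset.subset_univ _, ?_⟩, fun x y _ _ hxy => ?_⟩
  · rcases mem_fillBlocks.1 ht with ⟨a, ha, rfl⟩ | ⟨i, d, hd, rfl⟩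
    · rw [Finset.card_map, hA.1 a ha]
    · rw [Finset.card_map, ((hD i).1 d hd).2]
  rcases same_filling_or_distinct_groups hpart hφ hxy with
    ⟨i, ⟨p, rfl⟩, ⟨q, rfl⟩⟩ | ⟨i, j, hij, u, hu, v, hv, rfl, rfl⟩
  · have hpq : p ≠ q := fun h => hxy (congrArg _ h)
    obtain ⟨d, ⟨hd, hpd, hqd⟩, huniq⟩ :=
      (hD i).2 p q (Finset.mem_univ _) (Finset.mem_univ _) hpq
    refine ⟨d.map (φ i), ⟨mem_fillBlocks.2 (Or.inr ⟨i, d, hd, rfl⟩),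
      Finset.mem_map_of_mem _ hpd, Finset.mem_map_of_mem _ hqd⟩, ?_⟩
    rintro t ⟨ht, hpt, hqt⟩
    rcases mem_fillBlocks.1 ht with ⟨a, ha, rfl⟩ | ⟨j, e, he, rfl⟩
    · exact (not_mem_gdd_of_mem_filling hφ (hA.2.1 a ha i) hxy ⟨p, rfl⟩ ⟨q, rfl⟩ hpt hqt).elim
    · obtain rfl := filling_index_unique hpart hφ hxy ⟨p, rfl⟩ ⟨q, rfl⟩
        (exists_of_mem_map hpt) (exists_of_mem_map hqt)
      rw [Finset.mem_map'] at hpt hqt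
      rw [huniq e ⟨he, hpt, hqt⟩]
  · obtain ⟨a, ⟨ha, hua, hva⟩, huniq⟩ := hA.2.2 i j hij u hu v hv
    refine ⟨a.map (Fin.succEmb n), ⟨mem_fillBlocks.2 (Or.inl ⟨a, ha, rfl⟩),
      Finset.mem_map_of_mem _ hua, Finset.mem_map_of_mem _ hva⟩, ?_⟩
    rintro t ⟨ht, hut, hvt⟩
    rcases mem_fillBlocks.1 ht with ⟨a', ha', rfl⟩ | ⟨k, e, he, rfl⟩
    · rw [huniq a' ⟨ha', by simpa using hut, by simpa using hvt⟩]
    · have hk := (hφ k _).1 (exists_of_mem_map hut)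
      have hk' := (hφ k _).1 (exists_of_mem_map hvt)
      simp only [Fin.succ_ne_zero, false_or, Fin.succ_inj, exists_eq_right] at hk hk'
      exact absurd (((hpart u).unique hu hk).trans ((hpart v).unique hk' hv)) hij

lemma exists_isFilling (hsize : ∀ i, (G i).card = g i) :
    ∃ φ : ∀ i, Fin (g i + 1) ↪ Fin (n + 1), IsFilling G φ := by
  have hcard : ∀ i, (insert 0 ((G i).map (Fin.succEmb n))).card = g i + 1 := by
    intro i
    rw [Finset.card_insert_of_notMem (by simp [Fin.succ_ne_zero]), Finset.card_map, hsize]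
  refine ⟨fun i => (Finset.orderEmbOfFin _ (hcard i)).toEmbedding, fun i y => ?_⟩
  change y ∈ Set.range (Finset.orderEmbOfFin _ (hcard i)) ↔ _
  rw [Finset.range_orderEmbOfFin]
  simp

end Filling

/-- Filling construction (i): given three 4-GDDs of type
`g_1 g_2 … g_s` with the same groups and pairwise-coincident intersections of size
`b`, and for each `i` three `S(2,4,g_i+1)` designs with pairwise-coincident
intersections of size `b_i`, there exist three `S(2,4,(∑ g_i)+1)` designs with
pairwise-coincident intersections of size `b + ∑ b_i`. -/
theorem stmt12 (s : ℕ) (g : Fin s → ℕ) (b : ℕ) (bi : Fin s → ℕ)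
    (G : Fin s → Finset (Fin (∑ i, g i)))
    (hpart : ∀ x, ∃! i, x ∈ G i) (hsize : ∀ i, (G i).card = g i)
    (A1 A2 A3 : Finset (Finset (Fin (∑ i, g i))))
    (hA1 : IsGDD4Blocks G A1) (hA2 : IsGDD4Blocks G A2) (hA3 : IsGDD4Blocks G A3)
    (hbal : CoincidentInts A1 A2 A3) (hb : (A1 ∩ A2 ∩ A3).card = b)
    (hdes : ∀ i : Fin s, ∃ D1 D2 D3 : Finset (Finset (Fin (g i + 1))),
      IsS24 Finset.univ D1 ∧ IsS24 Finset.univ D2 ∧ IsS24 Finset.univ D3 ∧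
      CoincidentInts D1 D2 D3 ∧ (D1 ∩ D2 ∩ D3).card = bi i) :
    (b + ∑ i, bi i) ∈ J3 ((∑ i, g i) + 1) := by
  obtain ⟨φ, hφ⟩ := exists_isFilling hsize
  choose D1 D2 D3 hD1 hD2 hD3 hDbal hDcard using hdes
  have hA1' := isPartialGDD_of_isGDD4Blocks hA1
  have hA2' := isPartialGDD_of_isGDD4Blocks hA2
  have hA3' := isPartialGDD_of_isGDD4Blocks hA3
  have c1 : ∀ i, ∀ d ∈ D1 i, d.card = 4 := fun i d hd => ((hD1 i).1 d hd).2
  have c2 : ∀ i, ∀ d ∈ D2 i, d.card = 4 := fun i d hd => ((hD2 i).1 d hd).2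
  have c3 : ∀ i, ∀ d ∈ D3 i, d.card = 4 := fun i d hd => ((hD3 i).1 d hd).2
  have hA12 : IsPartialGDD G (A1 ∩ A2) := fun a ha => hA1' a (Finset.mem_inter.1 ha).1
  have c12 : ∀ i, ∀ d ∈ D1 i ∩ D2 i, d.card = 4 :=
    fun i d hd => c1 i d (Finset.mem_inter.1 hd).1
  refine ⟨fillBlocks φ A1 D1, fillBlocks φ A2 D2, fillBlocks φ A3 D3,
    isS24_fillBlocks hpart hφ hA1 hD1, isS24_fillBlocks hpart hφ hA2 hD2,
    isS24_fillBlocks hpart hφ hA3 hD3, ⟨?_, ?_⟩, ?_⟩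
  · rw [fillBlocks_inter hpart hφ hA1' hA2' c1 c2, fillBlocks_inter hpart hφ hA1' hA3' c1 c3,
      hbal.1, funext fun i => (hDbal i).1]
  · rw [fillBlocks_inter hpart hφ hA1' hA2' c1 c2, fillBlocks_inter hpart hφ hA2' hA3' c2 c3,
      hbal.2, funext fun i => (hDbal i).2]
  · rw [fillBlocks_inter hpart hφ hA1' hA2' c1 c2, fillBlocks_inter hpart hφ hA12 hA3' c12 c3,
      card_fillBlocks hpart hφ (fun a ha => hA12 a (Finset.mem_inter.1 ha).1)
        (fun i d hd => c12 i d (Finset.mem_inter.1 hd).1), hb]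
    simp only [hDcard]
end
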